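/- Suppose the minimum-time lateral interception of a continuously moving target E: [0,∞) → ℝ² × (ℝ/2πℤ) by the Dubins car is achieved at a finite time T, i.e., E(t) ∉ R(t) for all t ∈ [0, T) and E(T) ∈ R(T). Then E(T) ∈ E(T) := E_CSC(T) ∪ E_CCC(T), the set of endpoints of CSC- and CCC-trajectories at time T. -/

import Mathlib

/-- The Dubins reachable set at time `t`: all configurations in ℝ² × (ℝ/2πℤ) reachable
from `(0, 0, π/2)` under `ẋ = cos φ`, `ẏ = sin φ`, `φ̇ = u`, using a measurable control
with values in `[-1, 1]`. -/
noncomputable def DubinsReach (t : ℝ) : Set (ℝ × ℝ × Real.Angle) :=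
  {P | ∃ u : ℝ → ℝ, Measurable u ∧ (∀ τ, u τ ∈ Set.Icc (-1 : ℝ) 1) ∧
    P = (∫ r in (0 : ℝ)..t, Real.cos (Real.pi / 2 + ∫ q in (0 : ℝ)..r, u q),
         ∫ r in (0 : ℝ)..t, Real.sin (Real.pi / 2 + ∫ q in (0 : ℝ)..r, u q),
         (↑(Real.pi / 2 + ∫ q in (0 : ℝ)..t, u q) : Real.Angle))}

/-- Terminal configuration at time `t` of the Dubins car starting at `(0,0,π/2)` along a
CSC-trajectory with turn directions `s`, `σ` and switch times `τ₁`, `τ₂`;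
the heading is an angle in ℝ/2πℤ. -/
noncomputable def PCSC (s σ t τ₁ τ₂ : ℝ) : ℝ × ℝ × Real.Angle :=
  (s * (Real.cos τ₁ - 1 - (τ₂ - τ₁) * Real.sin τ₁)
     + σ * (Real.cos (s * τ₁ + σ * (t - τ₂)) - Real.cos τ₁),
   Real.sin τ₁ + (τ₂ - τ₁) * Real.cos τ₁
     - σ * (s * Real.sin τ₁ - Real.sin (s * τ₁ + σ * (t - τ₂))),
   (↑(Real.pi / 2 + s * τ₁ + σ * (t - τ₂)) : Real.Angle))

/-- Terminal configuration at time `t` of the Dubins car starting at `(0,0,π/2)` along a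
CCC-trajectory with first turn direction `s` and switch times `τ₁`, `τ₂`;
the heading is an angle in ℝ/2πℤ. -/
noncomputable def PCCC (s t τ₁ τ₂ : ℝ) : ℝ × ℝ × Real.Angle :=
  (s * (2 * Real.cos τ₁ - 1 - 2 * Real.cos (2 * τ₁ - τ₂)
      + Real.cos (2 * τ₁ - 2 * τ₂ + t)),
   2 * Real.sin τ₁ - 2 * Real.sin (2 * τ₁ - τ₂)
      + Real.sin (2 * τ₁ - 2 * τ₂ + t),
   (↑(Real.pi / 2 + s * (2 * τ₁ - 2 * τ₂ + t)) : Real.Angle))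

/-- The set of terminal points of CSC-trajectories at time `t`. -/
def ECSC (t : ℝ) : Set (ℝ × ℝ × Real.Angle) :=
  {P | ∃ s σ τ₁ τ₂ : ℝ, (s = 1 ∨ s = -1) ∧ (σ = 1 ∨ σ = -1) ∧
    τ₁ ∈ Set.Ico 0 (2 * Real.pi) ∧ τ₂ ∈ Set.Icc τ₁ t ∧ P = PCSC s σ t τ₁ τ₂}

/-- The set of terminal points of CCC-trajectories at time `t`. -/
def ECCC (t : ℝ) : Set (ℝ × ℝ × Real.Angle) :=
  {P | ∃ s τ₁ τ₂ : ℝ, (s = 1 ∨ s = -1) ∧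
    τ₁ ∈ Set.Ico 0 (2 * Real.pi) ∧ τ₂ ∈ Set.Icc τ₁ t ∧
    τ₂ - τ₁ ∈ Set.Ico 0 (2 * Real.pi) ∧ P = PCCC s t τ₁ τ₂}

/-!
Since `E` is continuous and misses the reachable sets before `T`, the point `(T, E T)` is not
interior to the reach tube, the set of all `(t, P)` with `P` reachable at time `t`. Rescaling time
turns the trajectories of variable duration into a convex set, and an open mapping theorem for
convex sets then produces a functional separating the first-order variations of the endpoint. This
is Pontryagin's principle: there is a switching function `G` with `G' = ρ sin (θ - α)` such that the
car turns as sharply as possible, in the direction of the sign of `G`, wherever `G ≠ 0`. The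
Hamiltonian `|G| + ρ cos (θ - α)` is conserved, so that the heading alone decides whether `G`
vanishes.

If `G` has a zero with `sin (θ - α) = 0`, then between the first and the last zero the car only goes
straight and makes full turns. Moving the turns to the last arc yields a CSC trajectory with the
same endpoint. Otherwise all zeros are transversal, and the arcs between consecutive zeros have the
same length, less than `2π`. Three zeros are impossible: reversing the arcs between two instants of
equal heading would give a trajectory to the same configuration with corners at three different
headings, whereas it would have to satisfy Pontryagin's principle too. With at most two zeros there
are at most three arcs.
-/

open Set Filter Topology MeasureTheory intervalIntegral Metric
open Complex (I)

/-! ### An open mapping theorem for convex sets -/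

section ConvexAnalysis

variable {V W X : Type*} [NormedAddCommGroup V] [NormedSpace ℝ V] [NormedAddCommGroup W]
  [NormedSpace ℝ W] [AddCommGroup X] [Module ℝ X]

theorem exists_nonpos_functional_of_zero_notMem_interior [FiniteDimensional ℝ V] {K : Set V}
    (hK : Convex ℝ K) (h0 : (0 : V) ∈ K) (hint : (0 : V) ∉ interior K) :
    ∃ f : V →L[ℝ] ℝ, f ≠ 0 ∧ ∀ x ∈ K, f x ≤ 0 := by
  obtain hempty | hne := (interior K).eq_empty_or_nonempty
  · have hspan : Submodule.span ℝ K < ⊤ := by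
      refine lt_top_iff_ne_top.2 fun h ↦ not_nonempty_iff_eq_empty.2 hempty ?_
      rw [hK.interior_nonempty_iff_affineSpan_eq_top,
        AffineSubspace.affineSpan_eq_top_iff_vectorSpan_eq_top_of_nonempty _ _ _ ⟨0, h0⟩,
        vectorSpan_eq_span_vsub_set_right ℝ h0]
      simpa using h
    obtain ⟨f, hf, hker⟩ := Submodule.exists_le_ker_of_lt_top _ hspan
    exact ⟨f.toContinuousLinearMap, by simpa using hf,
      fun x hx ↦ (LinearMap.mem_ker.1 (hker (Submodule.subset_span hx))).le⟩
  · obtain ⟨f, hf⟩ := geometric_hahn_banach_open_point hK.interior isOpen_interior hint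
    simp only [map_zero] at hf
    refine ⟨f, ?_, fun x hx ↦ ?_⟩
    · rintro rfl
      obtain ⟨x, hx⟩ := hne
      simpa using hf x hx
    · have hclosure : x ∈ closure (interior K) := by
        rw [hK.closure_interior_eq_closure_of_nonempty_interior hne]
        exact subset_closure hx
      exact closure_minimal (fun y hy ↦ (hf y hy).le)
        (isClosed_le f.continuous continuous_const) hclosure

theorem closedBall_subset_of_convex_of_closedBall_subset {S : Set W} (hS : Convex ℝ S) {x w : W}
    {m t : ℝ} (hx : x ∈ S) (hw : closedBall w m ⊆ S) (ht0 : 0 < t) (ht1 : t ≤ 1) :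
    closedBall (x + t • (w - x)) (t * m) ⊆ S := by
  intro y hy
  have hmem : w + t⁻¹ • (y - (x + t • (w - x))) ∈ S := hw <| by
    rw [mem_closedBall_iff_norm] at hy ⊢
    rw [add_sub_cancel_left, norm_smul, norm_inv, Real.norm_of_nonneg ht0.le,
      inv_mul_le_iff₀ ht0]
    exact hy
  have hcomb : (1 - t) • x + t • (w + t⁻¹ • (y - (x + t • (w - x)))) = y := by
    rw [smul_add, smul_inv_smul₀ ht0.ne']
    module
  exact hcomb ▸ hS hx hmem (sub_nonneg.2 ht1) ht0.le (by ring)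

theorem eventually_norm_sub_le_of_fderiv_eq_zero {f : W → V} {f' : W →L[ℝ] V} {x v : W}
    (hf : HasFDerivAt f f' x) (hv : f' v = 0) {c : ℝ} (hc : 0 < c) :
    ∀ᶠ t in 𝓝[>] (0 : ℝ), ‖f (x + t • v) - f x‖ ≤ c * t := by
  have hline : HasDerivAt (fun t : ℝ ↦ x + t • v) v 0 := by
    simpa using ((hasDerivAt_id (0 : ℝ)).smul_const v).const_add x
  have hcurve : HasDerivAt (fun t : ℝ ↦ f (x + t • v)) (f' v) 0 :=
    HasFDerivAt.comp_hasDerivAt_of_eq (0 : ℝ) hf hline (by simp)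
  filter_upwards [nhdsWithin_le_nhds (hcurve.isLittleO.def hc), self_mem_nhdsWithin] with t ht ht0
  simpa [hv, abs_of_pos (mem_Ioi.1 ht0)] using ht

/-- Along the critical direction `w - x` the value of `f` changes by `o(t)`, while around the point
`x + t • (w - x)` it covers a ball of radius proportional to `t`. -/
theorem image_mem_nhds_of_hasStrictFDerivAt_of_convex [CompleteSpace V] [CompleteSpace W]
    {f : W → V} {f' : W →L[ℝ] V} {x w : W} {S : Set W} (hf : HasStrictFDerivAt f f' x)
    (hsurj : Function.Surjective f') (hS : Convex ℝ S) (hx : x ∈ S) (hw : w ∈ interior S)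
    (hfw : f' (w - x) = 0) : f '' S ∈ 𝓝 (f x) := by
  obtain ⟨m, hm, hball⟩ := nhds_basis_closedBall.mem_iff.1 (mem_interior_iff_mem_nhds.1 hw)
  have hrange : f'.range = ⊤ := LinearMap.range_eq_top.2 hsurj
  let inv := f'.nonlinearRightInverseOfSurjective hrange
  have hpos : 0 < inv.nnnorm := f'.nonlinearRightInverseOfSurjective_nnnorm_pos hrange
  obtain ⟨s, hs, happrox⟩ :=
    hf.approximates_deriv_on_nhds (c := inv.nnnorm⁻¹ / 2) (.inr (by positivity))
  obtain ⟨ε, hε, hεs⟩ := nhds_basis_closedBall.mem_iff.1 hs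
  have hrate : (inv.nnnorm : ℝ)⁻¹ - ((inv.nnnorm⁻¹ / 2 : NNReal) : ℝ) = (inv.nnnorm : ℝ)⁻¹ / 2 := by
    push_cast
    ring
  have hslow := eventually_norm_sub_le_of_fderiv_eq_zero hf.hasFDerivAt hfw
    (c := (inv.nnnorm : ℝ)⁻¹ / 4 * m) (by positivity)
  have hsmall : ∀ᶠ t in 𝓝[>] (0 : ℝ), t * (‖w - x‖ + m) < ε :=
    nhdsWithin_le_nhds <| (by fun_prop : Continuous fun t : ℝ ↦ t * (‖w - x‖ + m)).continuousAt
      |>.eventually_lt continuousAt_const (by simpa)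
  obtain ⟨t, ⟨ht, htε⟩, ht0, ht1⟩ := ((hslow.and hsmall).and (Ioc_mem_nhdsGT one_pos)).exists
  have hsub : closedBall (x + t • (w - x)) (t * m) ⊆ s := by
    refine (closedBall_subset_closedBall' ?_).trans hεs
    simp only [dist_self_add_left, norm_smul, Real.norm_of_nonneg ht0.le]
    linarith
  have hcover := happrox.surjOn_closedBall_of_nonlinearRightInverse inv (by positivity) hsub
  rw [hrate] at hcover
  refine mem_of_superset (closedBall_mem_nhds_of_mem ?_) (hcover.trans
    (image_mono (closedBall_subset_of_convex_of_closedBall_subset hS hx hball ht0 ht1)))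
  rw [mem_ball', dist_eq_norm]
  have : 0 < (inv.nnnorm : ℝ)⁻¹ * m * t := by positivity
  linarith

/-- `F` is strictly differentiable at `x` with derivative `D` along every finite-dimensional family
of directions. No topology on `X` is involved, so that `X` can be a space of controls. -/
def HasStrictFiniteDerivAt (F : X → V) (D : X →ₗ[ℝ] V) (x : X) : Prop :=
  ∀ (n : ℕ) (l : (Fin n → ℝ) →ₗ[ℝ] X),
    HasStrictFDerivAt (fun v ↦ F (x + l v)) (D ∘ₗ l).toContinuousLinearMap 0

theorem add_sum_smul_sub_mem_of_convex {ι : Type*} [Fintype ι] {C : Set X} (hC : Convex ℝ C)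
    {x : X} (hx : x ∈ C) {c : ι → X} (hc : ∀ i, c i ∈ C) {v : ι → ℝ} (hv : ∀ i, 0 ≤ v i)
    (hsum : ∑ i, v i ≤ 1) : x + ∑ i, v i • (c i - x) ∈ C := by
  have hcomb := hC.sum_mem (t := Finset.univ) (w := fun i : Option ι ↦ i.elim (1 - ∑ i, v i) v)
    (z := fun i ↦ i.elim x c) (by rintro (_ | i) - <;> simp [hv, hsum])
    (by simp [Fintype.sum_option]) (by rintro (_ | i) - <;> simp [hx, hc])
  convert hcomb using 1
  simp only [Fintype.sum_option, Option.elim_none, Option.elim_some, smul_sub,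
    Finset.sum_sub_distrib, ← Finset.sum_smul]
  module

theorem image_mem_nhds_of_convex [FiniteDimensional ℝ V] {F : X → V} {D : X →ₗ[ℝ] V} {x : X}
    {C : Set X} (hF : HasStrictFiniteDerivAt F D x) (hC : Convex ℝ C) (hx : x ∈ C)
    (hint : (0 : V) ∈ interior (D '' ((· - x) '' C))) : F '' C ∈ 𝓝 (F x) := by
  have : CompleteSpace V := FiniteDimensional.complete ℝ V
  obtain ⟨b, hb0, hbsub⟩ :=
    exists_mem_interior_convexHull_affineBasis (mem_interior_iff_mem_nhds.1 hint)
  have hlift : ∀ i, ∃ c ∈ C, D (c - x) = b i := fun i ↦ by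
    simpa using hbsub (subset_convexHull ℝ _ (mem_range_self i))
  choose c hcC hcb using hlift
  rw [b.interior_convexHull] at hb0
  let l : (Fin (Module.finrank ℝ V + 1) → ℝ) →ₗ[ℝ] X :=
    Fintype.linearCombination ℝ fun i ↦ c i - x
  have hl : ∀ v, l v = ∑ i, v i • (c i - x) := fun v ↦ rfl
  have hDl : ∀ v, D (l v) = ∑ i, v i • b i := fun v ↦ by simp [hl, hcb]
  have hsurj : Function.Surjective (D ∘ₗ l).toContinuousLinearMap := fun y ↦ by
    refine ⟨fun i ↦ b.coord i y - b.coord i 0, ?_⟩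
    simp [hDl, sub_smul, b.linear_combination_coord_eq_self]
  let S : Set (Fin (Module.finrank ℝ V + 1) → ℝ) := {v | x + l v ∈ C}
  have hS : Convex ℝ S := (hC.translate_preimage_right x).linear_preimage l
  have hsub : {v | (∀ i, 0 < v i) ∧ ∑ i, v i < 1} ⊆ interior S := by
    refine interior_maximal (fun v hv ↦ ?_) ?_
    · exact add_sum_smul_sub_mem_of_convex hC hx hcC (fun i ↦ (hv.1 i).le) hv.2.le
    · simp only [ofPred_and, ofPred_forall]
      exact (isOpen_iInter_of_finite fun i ↦ isOpen_lt continuous_const (continuous_apply i)).inter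
        (isOpen_lt (by fun_prop) continuous_const)
  have hcover := image_mem_nhds_of_hasStrictFDerivAt_of_convex (S := S) (hF _ l) hsurj hS
    (by simpa [S] using hx) (w := fun i ↦ (1 / 2) * b.coord i 0)
    (hsub ⟨fun i ↦ mul_pos one_half_pos (hb0 i), by
      rw [← Finset.mul_sum, b.sum_coord_apply_eq_one]
      norm_num⟩)
    (by simp [hDl, mul_smul, ← Finset.smul_sum, b.linear_combination_coord_eq_self])
  simp only [map_zero, add_zero] at hcover
  refine mem_of_superset hcover ?_
  rintro _ ⟨v, hv, rfl⟩
  exact mem_image_of_mem F hv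

end ConvexAnalysis

/-- The unit complex number of argument `x`. -/
noncomputable def cis (x : ℝ) : ℂ := Complex.exp (x * I)

@[simp] theorem cis_re (x : ℝ) : (cis x).re = Real.cos x := Complex.exp_ofReal_mul_I_re x

@[simp] theorem cis_im (x : ℝ) : (cis x).im = Real.sin x := Complex.exp_ofReal_mul_I_im x

@[simp] theorem cis_zero : cis 0 = 1 := by simp [cis]

@[simp] theorem norm_cis (x : ℝ) : ‖cis x‖ = 1 := Complex.norm_exp_ofReal_mul_I x

theorem cis_eq_of_coe_eq {x y : ℝ} (h : (x : Real.Angle) = y) : cis x = cis y :=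
  Complex.ext (by rw [cis_re, cis_re, ← Real.Angle.cos_coe, h, Real.Angle.cos_coe])
    (by rw [cis_im, cis_im, ← Real.Angle.sin_coe, h, Real.Angle.sin_coe])

@[fun_prop]
theorem continuous_cis : Continuous cis := by
  unfold cis
  fun_prop

theorem hasDerivAt_cis (x : ℝ) : HasDerivAt cis (I * cis x) x := by
  have h : HasDerivAt (fun x : ℝ ↦ (x : ℂ) * I) I x := by
    simpa using (Complex.ofRealCLM.hasDerivAt (x := x)).mul_const I
  rw [mul_comm]
  exact h.cexp

theorem hasStrictFDerivAt_integral_cis {H : Type*} [NormedAddCommGroup H] [NormedSpace ℝ H]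
    {θ : ℝ → ℝ} (hθ : Continuous θ) {L : ℝ → H →L[ℝ] ℝ} (hL : Continuous L) (a b : ℝ) (v : H) :
    HasStrictFDerivAt (fun v ↦ ∫ r in a..b, cis (θ r + L r v))
      (∫ r in a..b, (L r).smulRight (I * cis (θ r + L r v))) v := by
  have hsmul : Continuous fun p : (H →L[ℝ] ℝ) × ℂ ↦ p.1.smulRight p.2 :=
    ((ContinuousLinearMap.smulRightL ℝ H ℂ).continuous₂ : _)
  have hderiv : Continuous fun v : H ↦ ∫ r in a..b, (L r).smulRight (I * cis (θ r + L r v)) := by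
    apply continuous_parametric_intervalIntegral_of_continuous'
    exact hsmul.comp (by fun_prop : Continuous fun p : H × ℝ ↦ (L p.2, I * cis (θ p.2 + L p.2 p.1)))
  refine hasStrictFDerivAt_of_hasFDerivAt_of_continuousAt (.of_forall fun v ↦ ?_)
    hderiv.continuousAt
  refine hasFDerivAt_integral_of_dominated_of_fderiv_le (𝕜 := ℝ) (bound := fun r ↦ ‖L r‖)
    (F' := fun v r ↦ (L r).smulRight (I * cis (θ r + L r v))) univ_mem (.of_forall fun v ↦ ?_)
    ?_ ?_ ?_ (hL.norm.intervalIntegrable _ _) ?_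
  · exact (by fun_prop : Continuous fun r ↦ cis (θ r + L r v)).aestronglyMeasurable
  · exact (by fun_prop : Continuous fun r ↦ cis (θ r + L r v)).intervalIntegrable _ _
  · exact (hsmul.comp (by fun_prop :
      Continuous fun r ↦ (L r, I * cis (θ r + L r v)))).aestronglyMeasurable
  · exact .of_forall fun r _ v _ ↦ by simp
  · refine .of_forall fun r _ v _ ↦ ?_
    have hinner := (L r).hasFDerivAt.const_add (x := v) (θ r)
    refine ((hasDerivAt_cis _).hasFDerivAt.comp v hinner).congr_fderiv ?_
    ext
    simp

/-! ### Trajectories of the Dubins car -/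

/-- The displacement over `[x, y]` of a unit-speed car whose heading is `π / 2 + θ`, in the complex
plane. -/
noncomputable def displacement (θ : ℝ → ℝ) (x y : ℝ) : ℂ := ∫ r in x..y, I * cis (θ r)

/-- The configuration with position `p.1` and heading `π / 2 + p.2`. -/
noncomputable def toConfig (p : ℂ × ℝ) : ℝ × ℝ × Real.Angle :=
  (p.1.re, p.1.im, ((Real.pi / 2 + p.2 : ℝ) : Real.Angle))

/-- The deviations `θ` from the initial heading `π / 2` that a Dubins car can follow: the
`1`-Lipschitz ones are exactly the primitives of the controls with values in `[-1, 1]`. -/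
def IsHeading (θ : ℝ → ℝ) : Prop := LipschitzWith 1 θ ∧ θ 0 = 0

/-- The configuration reached at time `t` along the heading deviation `θ`. -/
noncomputable def endConfig (θ : ℝ → ℝ) (t : ℝ) : ℝ × ℝ × Real.Angle :=
  toConfig (displacement θ 0 t, θ t)

theorem isOpenMap_toConfig : IsOpenMap toConfig := by
  have hangle : IsOpenMap fun x : ℝ ↦ ((Real.pi / 2 + x : ℝ) : Real.Angle) :=
    QuotientAddGroup.isOpenMap_coe.comp (isOpenMap_add_left _)
  have hsplit : IsOpenMap (Prod.map Complex.equivRealProdCLM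
      fun x : ℝ ↦ ((Real.pi / 2 + x : ℝ) : Real.Angle)) :=
    Complex.equivRealProdCLM.toHomeomorph.isOpenMap.prodMap hangle
  exact (Homeomorph.prodAssoc ℝ ℝ Real.Angle).isOpenMap.comp hsplit

theorem lipschitzWith_one_iff {θ : ℝ → ℝ} : LipschitzWith 1 θ ↔ ∀ x y, |θ x - θ y| ≤ |x - y| := by
  simp [lipschitzWith_iff_dist_le_mul, Real.dist_eq]

theorem integral_deriv_eq_sub_of_lipschitz {θ : ℝ → ℝ} (hθ : LipschitzWith 1 θ) (x y : ℝ) :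
    ∫ r in x..y, deriv θ r = θ y - θ x :=
  hθ.lipschitzOnWith.absolutelyContinuousOnInterval.integral_deriv_eq_sub

theorem abs_deriv_le_one_of_lipschitz {θ : ℝ → ℝ} (hθ : LipschitzWith 1 θ) (r : ℝ) :
    |deriv θ r| ≤ 1 := by
  simpa using norm_deriv_le_of_lipschitz (x₀ := r) hθ

theorem intervalIntegrable_of_abs_le_one {u : ℝ → ℝ} (hu : Measurable u) (hbound : ∀ r, |u r| ≤ 1)
    (x y : ℝ) : IntervalIntegrable u volume x y :=
  (intervalIntegrable_const (c := (1 : ℝ))).mono_fun hu.aestronglyMeasurable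
    (.of_forall fun r ↦ by simpa using hbound r)

theorem isHeading_integral {u : ℝ → ℝ} (hu : Measurable u) (hbound : ∀ r, |u r| ≤ 1) :
    IsHeading fun r ↦ ∫ q in (0 : ℝ)..r, u q := by
  refine ⟨lipschitzWith_one_iff.2 fun x y ↦ ?_, integral_same⟩
  rw [integral_interval_sub_left (intervalIntegrable_of_abs_le_one hu hbound _ _)
    (intervalIntegrable_of_abs_le_one hu hbound _ _)]
  simpa using norm_integral_le_of_norm_le_const (f := u) (a := y) (b := x) (C := 1)
    fun r _ ↦ hbound r

theorem displacement_re {θ : ℝ → ℝ} (hθ : Continuous θ) (x y : ℝ) :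
    (displacement θ x y).re = ∫ r in x..y, Real.cos (Real.pi / 2 + θ r) := by
  have h := Complex.reCLM.intervalIntegral_comp_comm
    (Continuous.intervalIntegrable (u := fun r ↦ I * cis (θ r)) (μ := volume) (by fun_prop) x y)
  simpa [displacement, add_comm (Real.pi / 2), Real.cos_add_pi_div_two] using h.symm

theorem displacement_im {θ : ℝ → ℝ} (hθ : Continuous θ) (x y : ℝ) :
    (displacement θ x y).im = ∫ r in x..y, Real.sin (Real.pi / 2 + θ r) := by
  have h := Complex.imCLM.intervalIntegral_comp_comm
    (Continuous.intervalIntegrable (u := fun r ↦ I * cis (θ r)) (μ := volume) (by fun_prop) x y)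
  simpa [displacement, add_comm (Real.pi / 2), Real.sin_add_pi_div_two] using h.symm

theorem mem_dubinsReach_iff {t : ℝ} {P : ℝ × ℝ × Real.Angle} :
    P ∈ DubinsReach t ↔ ∃ θ, IsHeading θ ∧ endConfig θ t = P := by
  constructor
  · rintro ⟨u, hu, hbound, rfl⟩
    have hθ := isHeading_integral hu fun r ↦ abs_le.2 (hbound r)
    refine ⟨_, hθ, ?_⟩
    simp only [endConfig, toConfig, displacement_re hθ.1.continuous,
      displacement_im hθ.1.continuous]
  · rintro ⟨θ, ⟨hθ, h0⟩, rfl⟩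
    refine ⟨deriv θ, measurable_deriv θ, fun r ↦ abs_le.1 (abs_deriv_le_one_of_lipschitz hθ r), ?_⟩
    simp only [integral_deriv_eq_sub_of_lipschitz hθ, h0, sub_zero, endConfig, toConfig,
      displacement_re hθ.continuous, displacement_im hθ.continuous]

/-- The set of pairs `(t, P)` such that the Dubins car can be in configuration `P` at time `t`. -/
def reachTube : Set (ℝ × ℝ × ℝ × Real.Angle) := {q | q.2 ∈ DubinsReach q.1}

/-- Pairs `(a, η)` of a duration factor `a` and a rescaled heading deviation `r ↦ η (r / a)`.
Rescaling time makes the duration a parameter, while keeping the set convex. -/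
def scaledHeadings : Set (ℝ × C(ℝ, ℝ)) :=
  {p | 0 < p.1 ∧ p.2 0 = 0 ∧ ∀ x y, |p.2 x - p.2 y| ≤ p.1 * |x - y|}

/-- The duration factor, position and heading deviation at time `p.1 * T` of the rescaled
trajectory `p`. -/
noncomputable def scaledEndpoint (T : ℝ) (p : ℝ × C(ℝ, ℝ)) : ℝ × ℂ × ℝ :=
  (p.1, p.1 • displacement p.2 0 T, p.2 T)

/-- The derivative of `scaledEndpoint T` at `(1, θ)`. -/
noncomputable def scaledEndpointDeriv (θ : C(ℝ, ℝ)) (T : ℝ) : ℝ × C(ℝ, ℝ) →ₗ[ℝ] ℝ × ℂ × ℝ where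
  toFun p := (p.1, p.1 • displacement θ 0 T - ∫ r in (0 : ℝ)..T, p.2 r • cis (θ r), p.2 T)
  map_add' p q := by
    have hp : IntervalIntegrable (fun r ↦ p.2 r • cis (θ r)) volume 0 T :=
      Continuous.intervalIntegrable (by fun_prop) _ _
    have hq : IntervalIntegrable (fun r ↦ q.2 r • cis (θ r)) volume 0 T :=
      Continuous.intervalIntegrable (by fun_prop) _ _
    simp only [Prod.fst_add, Prod.snd_add, ContinuousMap.add_apply, add_smul,
      integral_add hp hq, Prod.mk_add_mk, Prod.mk.injEq, true_and, and_true]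
    abel
  map_smul' c p := by
    simp only [Prod.smul_fst, Prod.smul_snd, ContinuousMap.smul_apply, smul_eq_mul, mul_smul,
      intervalIntegral.integral_smul, RingHom.id_apply, Prod.smul_mk, smul_sub]

theorem convex_scaledHeadings : Convex ℝ scaledHeadings := by
  rintro ⟨a, η⟩ ⟨ha, hη0, hη⟩ ⟨b, ζ⟩ ⟨hb, hζ0, hζ⟩ c d hc hd hcd
  refine ⟨?_, by simp_all, fun x y ↦ ?_⟩
  · exact (convex_Ioi (0 : ℝ)) ha hb hc hd hcd
  · calc |c * η x + d * ζ x - (c * η y + d * ζ y)|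
        = |c * (η x - η y) + d * (ζ x - ζ y)| := by ring_nf
      _ ≤ c * |η x - η y| + d * |ζ x - ζ y| := by
        simpa [abs_mul, abs_of_nonneg, hc, hd] using
          abs_add_le (c * (η x - η y)) (d * (ζ x - ζ y))
      _ ≤ c * (a * |x - y|) + d * (b * |x - y|) := by
        gcongr
        exacts [hη x y, hζ x y]
      _ = (c * a + d * b) * |x - y| := by ring

theorem mk_one_mem_scaledHeadings {θ : C(ℝ, ℝ)} (hθ : IsHeading θ) :
    (1, θ) ∈ scaledHeadings :=
  ⟨one_pos, hθ.2, by simpa using lipschitzWith_one_iff.1 hθ.1⟩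

theorem mem_reachTube_of_mem_scaledHeadings {p : ℝ × C(ℝ, ℝ)} (hp : p ∈ scaledHeadings) (T : ℝ) :
    (p.1 * T, toConfig (scaledEndpoint T p).2) ∈ reachTube := by
  obtain ⟨ha, h0, hlip⟩ := hp
  refine mem_dubinsReach_iff.2
    ⟨fun r ↦ p.2 (r / p.1), ⟨lipschitzWith_one_iff.2 fun x y ↦ ?_, ?_⟩, ?_⟩
  · refine (hlip _ _).trans_eq ?_
    rw [← sub_div, abs_div, abs_of_pos ha, mul_div_cancel₀ _ ha.ne']
  · simpa using h0
  · simp only [endConfig, displacement, scaledEndpoint,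
      integral_comp_div (fun r ↦ I * cis (p.2 r)) ha.ne', zero_div, mul_div_cancel_left₀ T ha.ne']

theorem hasStrictFiniteDerivAt_scaledEndpoint (θ : C(ℝ, ℝ)) (T : ℝ) :
    HasStrictFiniteDerivAt (scaledEndpoint T) (scaledEndpointDeriv θ T) (1, θ) := by
  intro n l
  let duration : (Fin n → ℝ) →L[ℝ] ℝ := (LinearMap.fst ℝ ℝ C(ℝ, ℝ) ∘ₗ l).toContinuousLinearMap
  let eval (r : ℝ) : (Fin n → ℝ) →L[ℝ] ℝ :=
    LinearMap.toContinuousLinearMap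
      ((ContinuousMap.evalCLM ℝ r).toLinearMap ∘ₗ LinearMap.snd ℝ ℝ C(ℝ, ℝ) ∘ₗ l)
  have heval : Continuous eval := continuous_clm_apply.2 fun v ↦ (l v).2.continuous
  have hdur : HasStrictFDerivAt (fun v ↦ 1 + duration v) duration 0 :=
    duration.hasStrictFDerivAt.const_add 1
  have hpos : HasStrictFDerivAt (fun v ↦ I * ∫ r in (0 : ℝ)..T, cis (θ r + eval r v)) _ 0 :=
    (hasStrictFDerivAt_integral_cis θ.continuous heval 0 T 0).const_mul I
  have hend : HasStrictFDerivAt (fun v ↦ θ T + eval T v) (eval T) 0 :=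
    (eval T).hasStrictFDerivAt.const_add (θ T)
  have hcont : Continuous fun r ↦ (eval r).smulRight (I * cis (θ r)) :=
    continuous_clm_apply.2 fun v ↦ by
      simp only [ContinuousLinearMap.smulRight_apply]
      fun_prop
  have hpos_apply : ∀ v, I * (∫ r in (0 : ℝ)..T, (eval r).smulRight (I * cis (θ r))) v =
      -∫ r in (0 : ℝ)..T, (l v).2 r • cis (θ r) := fun v ↦ by
    rw [ContinuousLinearMap.intervalIntegral_apply (hcont.intervalIntegrable _ _),
      ← intervalIntegral.integral_const_mul, ← intervalIntegral.integral_neg]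
    refine integral_congr fun r _ ↦ ?_
    simp [eval, mul_left_comm I, ← mul_assoc I I]
  refine ((hdur.prodMk ((hdur.smul hpos).prodMk hend)).congr_fderiv ?_).congr_of_eventuallyEq
    (.of_forall fun v ↦ ?_)
  · refine ContinuousLinearMap.ext fun v ↦ Prod.ext rfl (Prod.ext ?_ rfl)
    simp [hpos_apply, scaledEndpointDeriv, displacement, duration, add_comm, sub_eq_add_neg]
  · simp [scaledEndpoint, displacement, duration, eval]

/-- The first-order variations of `scaledEndpoint T` at `(1, θ)` within `scaledHeadings`. -/
noncomputable def endpointVariations (θ : C(ℝ, ℝ)) (T : ℝ) : Set (ℝ × ℂ × ℝ) :=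
  scaledEndpointDeriv θ T '' ((· - (1, θ)) '' scaledHeadings)

theorem mem_endpointVariations {θ : C(ℝ, ℝ)} {T : ℝ} {p : ℝ × C(ℝ, ℝ)} (hp : p ∈ scaledHeadings) :
    scaledEndpointDeriv θ T (p - (1, θ)) ∈ endpointVariations θ T :=
  mem_image_of_mem _ (mem_image_of_mem _ hp)

theorem convex_endpointVariations (θ : C(ℝ, ℝ)) (T : ℝ) : Convex ℝ (endpointVariations θ T) := by
  refine Convex.linear_image ?_ _
  simpa [sub_eq_neg_add] using convex_scaledHeadings.translate (-(1, θ))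

theorem zero_mem_endpointVariations {θ : C(ℝ, ℝ)} (hθ : IsHeading θ) (T : ℝ) :
    (0 : ℝ × ℂ × ℝ) ∈ endpointVariations θ T := by
  simpa using mem_endpointVariations (θ := θ) (T := T) (mk_one_mem_scaledHeadings hθ)

theorem zero_notMem_interior_endpointVariations {θ : C(ℝ, ℝ)} (hθ : IsHeading θ) {T : ℝ}
    (hT : 0 < T) (hmem : (T, endConfig θ T) ∉ interior reachTube) :
    (0 : ℝ × ℂ × ℝ) ∉ interior (endpointVariations θ T) := fun hint ↦ hmem <| by
  have himage := image_mem_nhds_of_convex (hasStrictFiniteDerivAt_scaledEndpoint θ T)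
    convex_scaledHeadings (mk_one_mem_scaledHeadings hθ) hint
  have hopen : IsOpenMap (Prod.map (· * T) toConfig) :=
    (Homeomorph.mulRight₀ T hT.ne').isOpenMap.prodMap isOpenMap_toConfig
  have htube := hopen.image_mem_nhds himage
  simp only [scaledEndpoint, Prod.map_apply, one_mul, one_smul] at htube
  refine mem_interior_iff_mem_nhds.2 (mem_of_superset htube ?_)
  rintro _ ⟨_, ⟨p, hp, rfl⟩, rfl⟩
  exact mem_reachTube_of_mem_scaledHeadings hp T

/-- A separating functional cannot see the duration alone, since the duration can be changed in
both directions. -/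
theorem exists_functional_of_notMem_interior_reachTube {θ : C(ℝ, ℝ)} (hθ : IsHeading θ) {T : ℝ}
    (hT : 0 < T) (hmem : (T, endConfig θ T) ∉ interior reachTube) :
    ∃ f : ℂ × ℝ →L[ℝ] ℝ, f ≠ 0 ∧ ∀ η : C(ℝ, ℝ), IsHeading η →
      f (-∫ r in (0 : ℝ)..T, (η r - θ r) • cis (θ r), η T - θ T) ≤ 0 := by
  obtain ⟨g, hg, hle⟩ := exists_nonpos_functional_of_zero_notMem_interior
    (convex_endpointVariations θ T) (zero_mem_endpointVariations hθ T)
    (zero_notMem_interior_endpointVariations hθ hT hmem)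
  have hg_apply : ∀ a y, g (a, y) = a * g (1, 0) + g (0, y) := fun a y ↦ by
    rw [← smul_eq_mul, ← map_smul, ← map_add]
    simp
  refine ⟨g.comp (.inr ℝ ℝ (ℂ × ℝ)), fun h ↦ hg ?_, fun η hη ↦ ?_⟩
  · have hsnd : ∀ y, g (0, y) = 0 := fun y ↦ DFunLike.congr_fun h y
    have hscaled : ∀ a > 0, (a - 1) * g (1, 0) ≤ 0 := fun a ha ↦ by
      have hp : (a, a • θ) ∈ scaledHeadings := ⟨ha, by simp [hθ.2], fun x y ↦ by
        simpa [← mul_sub, abs_mul, abs_of_pos ha] using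
          mul_le_mul_of_nonneg_left (lipschitzWith_one_iff.1 hθ.1 x y) ha.le⟩
      have := hle _ (mem_endpointVariations hp)
      rwa [← Prod.mk.eta (p := scaledEndpointDeriv _ _ _), hg_apply, hsnd, add_zero] at this
    have hfst : g (1, 0) = 0 := by linarith [hscaled 2 two_pos, hscaled (1 / 2) one_half_pos]
    exact ContinuousLinearMap.ext fun p ↦ by simpa [hsnd, hfst] using hg_apply p.1 p.2
  · have := hle _ (mem_endpointVariations (mk_one_mem_scaledHeadings hη))
    simpa [scaledEndpointDeriv] using this

/-! ### Pontryagin's principle -/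

/-- The necessary conditions of Pontryagin's principle for the heading `θ` on `[0, T]`: the
switching function `G`, the costate of the heading, determines the direction of the turn where it
does not vanish. Here `ρ` and `α` are the polar coordinates of the constant costate of the
position. -/
structure IsSwitchingFunction (θ : ℝ → ℝ) (T ρ α : ℝ) (G : ℝ → ℝ) : Prop where
  hasDerivAt (r : ℝ) : HasDerivAt G (ρ * Real.sin (θ r - α)) r
  ne_zero (hρ : ρ = 0) (r : ℝ) : G r ≠ 0
  eq_add_mul {x y s : ℝ} (hs : s = 1 ∨ s = -1) (hx : 0 ≤ x) (hxy : x ≤ y) (hy : y ≤ T)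
    (hpos : ∀ r ∈ Ioo x y, 0 < s * G r) : θ y = θ x + s * (y - x)

theorem exists_polar_form (f : ℂ →L[ℝ] ℝ) :
    ∃ ρ α : ℝ, (∀ x, f (cis x) = ρ * Real.sin (x - α)) ∧ (ρ = 0 → f = 0) := by
  have hf : ∀ z, f z = z.re * f 1 + z.im * f I := fun z ↦ by
    have hz : z = z.re • (1 : ℂ) + z.im • I := by simp
    conv_lhs => rw [hz, map_add, map_smul, map_smul, smul_eq_mul, smul_eq_mul]
  let w : ℂ := ⟨f I, -f 1⟩
  have hcos : ‖w‖ * Real.cos w.arg = f I := Complex.norm_mul_cos_arg w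
  have hsin : ‖w‖ * Real.sin w.arg = -f 1 := Complex.norm_mul_sin_arg w
  refine ⟨‖w‖, w.arg, fun x ↦ ?_, fun hw ↦ ContinuousLinearMap.ext fun z ↦ ?_⟩
  · rw [hf, cis_re, cis_im, Real.sin_sub]
    linear_combination -Real.sin x * hcos + Real.cos x * hsin
  · rw [hw, zero_mul] at hcos hsin
    simp [hf z, ← hcos, neg_eq_zero.1 hsin.symm]

theorem functional_variation_eq_integral {θ h G : ℝ → ℝ} (hθ : Continuous θ) {K : NNReal}
    (hh : LipschitzWith K h) (h0 : h 0 = 0) (f : ℂ × ℝ →L[ℝ] ℝ) {T : ℝ}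
    (hG : ∀ r, HasDerivAt G (f (cis (θ r), 0)) r) (hGT : G T = f (0, 1)) :
    f (-∫ r in (0 : ℝ)..T, h r • cis (θ r), h T) = ∫ r in (0 : ℝ)..T, G r * deriv h r := by
  have hderiv : deriv G = fun r ↦ f (cis (θ r), 0) := funext fun r ↦ (hG r).deriv
  have hsmooth : ContDiff ℝ 1 G :=
    contDiff_one_iff_deriv.2 ⟨fun r ↦ (hG r).differentiableAt, by rw [hderiv]; fun_prop⟩
  have hparts := (hsmooth.contDiffOn (s := uIcc 0 T)).absolutelyContinuousOnInterval
    |>.integral_mul_deriv_eq_deriv_mul hh.lipschitzOnWith.absolutelyContinuousOnInterval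
  have hint : IntervalIntegrable (fun r ↦ h r • cis (θ r)) volume 0 T :=
    Continuous.intervalIntegrable (by have := hh.continuous; fun_prop) _ _
  have hfst : f (∫ r in (0 : ℝ)..T, h r • cis (θ r), 0) = ∫ r in (0 : ℝ)..T, deriv G r * h r := by
    refine ((f.comp (.inl ℝ ℂ ℝ)).intervalIntegral_comp_comm hint).symm.trans ?_
    refine integral_congr fun r _ ↦ ?_
    simp only [map_smul, hderiv, smul_eq_mul, mul_comm (h r)]
    rfl
  have hsnd : f (0, h T) = h T * f (0, 1) := by
    rw [← smul_eq_mul, ← map_smul]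
    simp
  rw [hparts, h0, hGT, ← hfst, mul_zero, sub_zero, mul_comm, ← hsnd, ← map_sub]
  simp

theorem ae_deriv_integral_eq {u : ℝ → ℝ} (hu : Measurable u) (hbound : ∀ r, |u r| ≤ 1) :
    ∀ᵐ r, deriv (fun r ↦ ∫ q in (0 : ℝ)..r, u q) r = u r := by
  have hloc : LocallyIntegrable u :=
    (locallyIntegrable_const (1 : ℝ)).mono hu.aestronglyMeasurable
      (.of_forall fun r ↦ by simpa using hbound r)
  filter_upwards [LocallyIntegrable.ae_hasDerivAt_integral hloc] with r hr using (hr 0).deriv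

theorem ae_mul_sub_deriv_eq_zero_of_forall_integral_le {θ G : ℝ → ℝ} (hθ : LipschitzWith 1 θ)
    (hG : Continuous G) {T : ℝ} (hT : 0 ≤ T)
    (hmax : ∀ η, IsHeading η → ∫ r in (0 : ℝ)..T, G r * (deriv η r - deriv θ r) ≤ 0)
    {u : ℝ → ℝ} (hu : Measurable u) (hbound : ∀ r, |u r| ≤ 1)
    (hnonneg : ∀ r, 0 ≤ G r * (u r - deriv θ r)) :
    ∀ᵐ r, r ∈ Ioc 0 T → G r * (u r - deriv θ r) = 0 := by
  have hint : IntervalIntegrable (fun r ↦ G r * (u r - deriv θ r)) volume 0 T :=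
    ((intervalIntegrable_of_abs_le_one hu hbound 0 T).sub (intervalIntegrable_of_abs_le_one
      (measurable_deriv θ) (abs_deriv_le_one_of_lipschitz hθ) 0 T)).continuousOn_mul hG.continuousOn
  have hle : ∫ r in (0 : ℝ)..T, G r * (u r - deriv θ r) ≤ 0 := by
    refine (intervalIntegral.integral_congr_ae ?_).trans_le (hmax _ (isHeading_integral hu hbound))
    filter_upwards [ae_deriv_integral_eq hu hbound] with r hr _
    rw [hr]
  exact (ae_restrict_iff' measurableSet_Ioc).1
    ((integral_eq_zero_iff_of_le_of_nonneg_ae hT (.of_forall hnonneg) hint).1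
      (hle.antisymm (integral_nonneg hT fun r _ ↦ hnonneg r)))

/-- Compare `θ` with the heading that uses the control `s` on `(x, y)`. -/
theorem eq_add_mul_of_forall_integral_le {θ G : ℝ → ℝ} (hθ : LipschitzWith 1 θ)
    (hG : Continuous G) {T : ℝ}
    (hmax : ∀ η, IsHeading η → ∫ r in (0 : ℝ)..T, G r * (deriv η r - deriv θ r) ≤ 0)
    {x y s : ℝ} (hs : s = 1 ∨ s = -1) (hx : 0 ≤ x) (hxy : x ≤ y) (hy : y ≤ T)
    (hpos : ∀ r ∈ Ioo x y, 0 < s * G r) : θ y = θ x + s * (y - x) := by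
  classical
  let u : ℝ → ℝ := (Ioo x y).piecewise (fun _ ↦ s) (deriv θ)
  have hθ' := abs_deriv_le_one_of_lipschitz hθ
  have hu : Measurable u := measurable_const.piecewise measurableSet_Ioo (measurable_deriv θ)
  have hu_of_mem : ∀ r ∈ Ioo x y, u r = s := fun r hr ↦ piecewise_eq_of_mem _ _ _ hr
  have hu_of_notMem : ∀ r ∉ Ioo x y, u r = deriv θ r := fun r hr ↦ piecewise_eq_of_notMem _ _ _ hr
  have hbound : ∀ r, |u r| ≤ 1 := fun r ↦ by
    by_cases hr : r ∈ Ioo x y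
    · rcases hs with rfl | rfl <;> simp [hu_of_mem r hr]
    · simpa only [hu_of_notMem r hr] using hθ' r
  have hnonneg : ∀ r, 0 ≤ G r * (u r - deriv θ r) := fun r ↦ by
    by_cases hr : r ∈ Ioo x y
    · have := hpos r hr
      have := abs_le.1 (hθ' r)
      rw [hu_of_mem r hr]
      rcases hs with rfl | rfl <;> nlinarith
    · simp [hu_of_notMem r hr]
  have hzero := ae_mul_sub_deriv_eq_zero_of_forall_integral_le hθ hG (hx.trans (hxy.trans hy)) hmax
    hu hbound hnonneg
  have hderiv : ∫ r in x..y, deriv θ r = ∫ _ in x..y, s := by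
    refine intervalIntegral.integral_congr_ae ?_
    filter_upwards [hzero, measure_eq_zero_iff_ae_notMem.1 (measure_singleton y)] with r hr hry hmem
    rw [uIoc_of_le hxy] at hmem
    have hIoo : r ∈ Ioo x y := ⟨hmem.1, hmem.2.lt_of_ne hry⟩
    have hGr : G r ≠ 0 := fun h ↦ by simpa [h] using hpos r hIoo
    have := (mul_eq_zero.1 (hr ⟨hx.trans_lt hIoo.1, hIoo.2.le.trans hy⟩)).resolve_left hGr
    rw [hu_of_mem r hIoo] at this
    linarith
  rw [integral_deriv_eq_sub_of_lipschitz hθ, intervalIntegral.integral_const, smul_eq_mul] at hderiv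
  linarith

theorem exists_isSwitchingFunction {θ : ℝ → ℝ} (hθ : IsHeading θ) {T : ℝ} (hT : 0 < T)
    (hmem : (T, endConfig θ T) ∉ interior reachTube) :
    ∃ ρ α G, IsSwitchingFunction θ T ρ α G := by
  have hcont := hθ.1.continuous
  obtain ⟨f, hf, hle⟩ :=
    exists_functional_of_notMem_interior_reachTube (θ := ⟨θ, hcont⟩) hθ hT hmem
  obtain ⟨ρ, α, hpolar, hρ⟩ := exists_polar_form (f.comp (.inl ℝ ℂ ℝ))
  let G (r : ℝ) : ℝ := f (0, 1) - ∫ t in r..T, f (cis (θ t), 0)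
  have hG : ∀ r, HasDerivAt G (f (cis (θ r), 0)) r := fun r ↦ by
    have hint : Continuous fun t ↦ f (cis (θ t), 0) := by fun_prop
    simpa using (integral_hasDerivAt_left (hint.intervalIntegrable r T)
      (hint.stronglyMeasurableAtFilter _ _) hint.continuousAt).const_sub (f (0, 1))
  refine ⟨ρ, α, G, fun r ↦ (hG r).congr_deriv (hpolar (θ r)), fun h0 r hr ↦ hf ?_, ?_⟩
  · have hfst : ∀ z, f (z, 0) = 0 := fun z ↦ DFunLike.congr_fun (hρ h0) z
    have hsnd : f (0, 1) = 0 := by simpa [G, hfst] using hr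
    refine ContinuousLinearMap.ext fun p ↦ ?_
    have hp : p = (p.1, 0) + p.2 • (0, 1) := by simp
    rw [hp, map_add, map_smul, hfst, hsnd]
    simp
  · refine eq_add_mul_of_forall_integral_le hθ.1
      (continuous_iff_continuousAt.2 fun r ↦ (hG r).continuousAt) fun η hη ↦ ?_
    have hvar := functional_variation_eq_integral (T := T) hcont (hη.1.sub hθ.1)
      (by simp [hη.2, hθ.2]) f hG (by simp [G])
    have hdiff {ξ : ℝ → ℝ} (hξ : LipschitzWith 1 ξ) : ∀ᵐ r, DifferentiableAt ℝ ξ r :=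
      hξ.ae_differentiableAt
    refine (intervalIntegral.integral_congr_ae ?_).trans_le
      (hvar.symm.trans_le (hle ⟨η, hη.1.continuous⟩ hη))
    filter_upwards [hdiff hη.1, hdiff hθ.1] with r hηr hθr _
    rw [← deriv_sub hηr hθr]
    rfl

/-- The function `θ` has constant slope `s` on `S`. -/
def HasSlopeOn (θ : ℝ → ℝ) (s : ℝ) (S : Set ℝ) : Prop :=
  ∀ u ∈ S, ∀ v ∈ S, θ v = θ u + s * (v - u)

namespace HasSlopeOn

variable {θ : ℝ → ℝ} {s : ℝ} {S S' : Set ℝ}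

theorem mono (h : HasSlopeOn θ s S) (hS : S' ⊆ S) : HasSlopeOn θ s S' :=
  fun u hu v hv ↦ h u (hS hu) v (hS hv)

theorem of_forall_eq {a : ℝ} (h : ∀ u ∈ S, θ u = θ a + s * (u - a)) : HasSlopeOn θ s S :=
  fun u hu v hv ↦ by rw [h u hu, h v hv]; ring

theorem trans {x y z : ℝ} (hxy : HasSlopeOn θ s (Icc x y)) (hyz : HasSlopeOn θ s (Icc y z))
    (hx : x ≤ y) (hz : y ≤ z) : HasSlopeOn θ s (Icc x z) := by
  refine of_forall_eq (a := y) fun u hu ↦ ?_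
  rcases le_total u y with huy | hyu
  · exact hxy y (right_mem_Icc.2 hx) u ⟨hu.1, huy⟩
  · exact hyz y (left_mem_Icc.2 hz) u ⟨hyu, hu.2⟩

end HasSlopeOn

theorem exists_forall_mul_pos_of_forall_ne_zero {G : ℝ → ℝ} {S : Set ℝ} (hS : IsPreconnected S)
    (hG : ContinuousOn G S) (hne : ∀ r ∈ S, G r ≠ 0) :
    ∃ s : ℝ, (s = 1 ∨ s = -1) ∧ ∀ r ∈ S, 0 < s * G r := by
  by_cases hpos : ∀ r ∈ S, 0 < G r
  · exact ⟨1, .inl rfl, by simpa using hpos⟩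
  push Not at hpos
  obtain ⟨q, hq, hGq⟩ := hpos
  refine ⟨-1, .inr rfl, fun r hr ↦ ?_⟩
  by_contra! hGr
  obtain ⟨c, hc, hGc⟩ := hS.intermediate_value hq hr hG ⟨hGq, by linarith⟩
  exact hne c hc hGc

theorem hasDerivAt_comp_of_lipschitz_of_deriv_zero {f θ : ℝ → ℝ} {K : NNReal}
    (hθ : LipschitzWith K θ) {x : ℝ} (hf : HasDerivAt f 0 (θ x)) :
    HasDerivAt (fun r ↦ f (θ r)) 0 x := by
  rw [hasDerivAt_iff_isLittleO] at hf ⊢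
  simp only [smul_zero, sub_zero] at hf ⊢
  refine (hf.comp_tendsto hθ.continuous.continuousAt).trans_isBigO ?_
  exact Asymptotics.IsBigO.of_bound K (.of_forall fun r ↦ hθ.norm_sub_le r x)

namespace IsSwitchingFunction

variable {θ G : ℝ → ℝ} {T ρ α : ℝ}

theorem continuous (h : IsSwitchingFunction θ T ρ α G) : Continuous G :=
  continuous_iff_continuousAt.2 fun r ↦ (h.hasDerivAt r).continuousAt

theorem hasSlopeOn (h : IsSwitchingFunction θ T ρ α G) {x y s : ℝ} (hs : s = 1 ∨ s = -1)
    (hx : 0 ≤ x) (hy : y ≤ T) (hpos : ∀ r ∈ Ioo x y, 0 < s * G r) : HasSlopeOn θ s (Icc x y) :=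
  .of_forall_eq fun _ hu ↦ h.eq_add_mul hs hx hu.1 (hu.2.trans hy) fun r hr ↦
    hpos r ⟨hr.1, hr.2.trans_le hu.2⟩

theorem exists_hasSlopeOn (h : IsSwitchingFunction θ T ρ α G) {x y : ℝ} (hx : 0 ≤ x) (hy : y ≤ T)
    (hne : ∀ r ∈ Ioo x y, G r ≠ 0) :
    ∃ s : ℝ, (s = 1 ∨ s = -1) ∧ (∀ r ∈ Ioo x y, 0 < s * G r) ∧ HasSlopeOn θ s (Icc x y) := by
  obtain ⟨s, hs, hpos⟩ :=
    exists_forall_mul_pos_of_forall_ne_zero isPreconnected_Ioo h.continuous.continuousOn hne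
  exact ⟨s, hs, hpos, h.hasSlopeOn hs hx hy hpos⟩

theorem eventually_ne_zero (h : IsSwitchingFunction θ T ρ α G) {z : ℝ}
    (hz : G z = 0 → Real.sin (θ z - α) ≠ 0) : ∀ᶠ r in 𝓝[≠] z, G r ≠ 0 := by
  by_cases hGz : G z = 0
  · have hρ : ρ ≠ 0 := fun hρ ↦ h.ne_zero hρ z hGz
    exact (h.hasDerivAt z).eventually_ne (mul_ne_zero hρ (hz hGz))
  · exact (h.continuous.continuousAt.eventually_ne hGz).filter_mono nhdsWithin_le_nhds

theorem hasDerivWithinAt_hamiltonian_of_hasSlopeOn (h : IsSwitchingFunction θ T ρ α G)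
    {x y s : ℝ} (hxy : x < y) (hs : s = 1 ∨ s = -1) (hpos : ∀ r ∈ Ioo x y, 0 < s * G r)
    (hslope : HasSlopeOn θ s (Icc x y)) :
    HasDerivWithinAt (fun r ↦ |G r| + ρ * Real.cos (θ r - α)) 0 (Ici x) x := by
  have habs : ∀ r ∈ Ico x y, |G r| = s * G r := fun r hr ↦ by
    have hclosed : IsClosed {q | 0 ≤ s * G q} :=
      isClosed_le continuous_const (h.continuous.const_mul s)
    have hmem : r ∈ closure (Ioo x y) := by
      rw [closure_Ioo hxy.ne]
      exact Ico_subset_Icc_self hr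
    have hnonneg : 0 ≤ s * G r := hclosed.closure_subset_iff.2 (fun q hq ↦ (hpos q hq).le) hmem
    rw [← abs_of_nonneg hnonneg, abs_mul]
    rcases hs with rfl | rfl <;> simp
  have hline : HasDerivAt (fun r ↦ θ x + s * (r - x) - α) s x := by
    simpa using ((((hasDerivAt_id x).sub_const x).const_mul s).const_add (θ x)).sub_const α
  have hderiv := (((h.hasDerivAt x).const_mul s).add (hline.cos.const_mul ρ)).hasDerivWithinAt
    (s := Ici x)
  refine (hderiv.congr_of_eventuallyEq_of_mem ?_ self_mem_Ici).congr_deriv (by ring_nf)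
  filter_upwards [Ico_mem_nhdsGE hxy] with r hr
  simp [habs r hr, hslope x (left_mem_Icc.2 hxy.le) r (Ico_subset_Icc_self hr)]

theorem hasDerivAt_hamiltonian_of_eq_zero (h : IsSwitchingFunction θ T ρ α G)
    (hθ : LipschitzWith 1 θ) {x : ℝ} (hG : G x = 0) (hsin : Real.sin (θ x - α) = 0) :
    HasDerivAt (fun r ↦ |G r| + ρ * Real.cos (θ r - α)) 0 x := by
  have habs : HasDerivAt (fun r ↦ |G r|) 0 x := by
    have hderiv := h.hasDerivAt x
    rw [hsin, mul_zero, hasDerivAt_iff_isLittleO] at hderiv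
    rw [hasDerivAt_iff_isLittleO]
    simpa [hG] using hderiv
  have hcos : HasDerivAt (fun y ↦ Real.cos (y - α)) 0 (θ x) := by
    simpa [hsin] using ((hasDerivAt_id (θ x)).sub_const α).cos
  exact (habs.add ((hasDerivAt_comp_of_lipschitz_of_deriv_zero hθ hcos).const_mul ρ)).congr_deriv
    (by simp)

theorem hamiltonian_eq (h : IsSwitchingFunction θ T ρ α G) (hθ : LipschitzWith 1 θ) {x : ℝ}
    (hx : x ∈ Icc 0 T) :
    |G x| + ρ * Real.cos (θ x - α) = |G 0| + ρ * Real.cos (θ 0 - α) := by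
  have hcont : Continuous fun r ↦ |G r| + ρ * Real.cos (θ r - α) := by
    have := h.continuous
    have := hθ.continuous
    fun_prop
  refine constant_of_has_deriv_right_zero hcont.continuousOn (fun r hr ↦ ?_) x hx
  by_cases hsing : G r = 0 ∧ Real.sin (θ r - α) = 0
  · exact (h.hasDerivAt_hamiltonian_of_eq_zero hθ hsing.1 hsing.2).hasDerivWithinAt
  · have hne := (h.eventually_ne_zero (not_and.1 hsing)).filter_mono (nhdsGT_le_nhdsNE r)
    obtain ⟨y, hy, hsub⟩ := (mem_nhdsGT_iff_exists_Ioo_subset' hr.2).1 hne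
    have hry : r < min y T := lt_min hy hr.2
    obtain ⟨s, hs, hpos, hslope⟩ := h.exists_hasSlopeOn hr.1 (min_le_right y T)
      fun q hq ↦ hsub ⟨hq.1, hq.2.trans_le (min_le_left y T)⟩
    exact h.hasDerivWithinAt_hamiltonian_of_hasSlopeOn hry hs hpos hslope

theorem eq_zero_iff_cos_eq (h : IsSwitchingFunction θ T ρ α G) (hθ : LipschitzWith 1 θ) {z r : ℝ}
    (hz : z ∈ Icc 0 T) (hr : r ∈ Icc 0 T) (hGz : G z = 0) :
    G r = 0 ↔ Real.cos (θ r - α) = Real.cos (θ z - α) := by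
  have hρ : ρ ≠ 0 := fun hρ ↦ h.ne_zero hρ z hGz
  have hconst := (h.hamiltonian_eq hθ hr).trans (h.hamiltonian_eq hθ hz).symm
  rw [hGz, abs_zero, zero_add] at hconst
  rw [← abs_eq_zero, ← mul_right_inj' hρ (b := Real.cos (θ r - α))]
  constructor <;> intro <;> linarith

theorem eq_zero_of_corner (h : IsSwitchingFunction θ T ρ α G) {a t b s : ℝ} (ha : 0 ≤ a)
    (hat : a < t) (htb : t < b) (hb : b ≤ T) (hs : s ≠ 0) (hleft : HasSlopeOn θ s (Icc a t))
    (hright : HasSlopeOn θ (-s) (Icc t b)) : G t = 0 := by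
  by_contra hGt
  obtain ⟨ε, hε, hne⟩ := Metric.eventually_nhds_iff.1
    (h.continuous.continuousAt.eventually_ne hGt)
  obtain ⟨δ, hδ, hlt⟩ := exists_between (lt_min hε (lt_min (sub_pos.2 hat) (sub_pos.2 htb)))
  simp only [lt_min_iff] at hlt
  obtain ⟨σ, -, -, hslope⟩ := h.exists_hasSlopeOn (x := t - δ) (y := t + δ) (by linarith)
    (by linarith) fun r hr ↦ hne <| by
      rw [Real.dist_eq, abs_lt]
      constructor <;> linarith [hr.1, hr.2]
  have ht : t ∈ Icc (t - δ) (t + δ) := ⟨by linarith, by linarith⟩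
  have hθl := hleft (t - δ) ⟨by linarith, by linarith⟩ t ⟨hat.le, le_rfl⟩
  have hθr := hright t ⟨le_rfl, htb.le⟩ (t + δ) ⟨by linarith, by linarith⟩
  rw [hslope (t - δ) ⟨le_rfl, by linarith⟩ t ht] at hθl
  rw [hslope t ht (t + δ) ⟨by linarith, le_rfl⟩] at hθr
  have hσ : δ * s = 0 := by linarith
  exact (mul_ne_zero hδ.ne' hs) hσ

end IsSwitchingFunction

/-! ### Trajectories made of arcs and segments -/

theorem coe_mul_add_nat_mul_two_pi {s : ℝ} (hs : s = 1 ∨ s = -1) (x : ℝ) (k : ℕ) :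
    ((s * (x + k * (2 * Real.pi)) : ℝ) : Real.Angle) = (s * x : ℝ) := by
  rw [Real.Angle.angle_eq_iff_two_pi_dvd_sub]
  rcases hs with rfl | rfl
  · exact ⟨k, by push_cast; ring⟩
  · exact ⟨-k, by push_cast; ring⟩

theorem exists_eq_add_nat_mul_two_pi {x : ℝ} (hx : 0 ≤ x) :
    ∃ τ ∈ Ico 0 (2 * Real.pi), ∃ k : ℕ, x = τ + k * (2 * Real.pi) := by
  have hle := Nat.floor_le (div_nonneg hx Real.two_pi_pos.le)
  have hlt := Nat.lt_floor_add_one (x / (2 * Real.pi))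
  rw [le_div_iff₀ Real.two_pi_pos] at hle
  rw [div_lt_iff₀ Real.two_pi_pos] at hlt
  exact ⟨x - ⌊x / (2 * Real.pi)⌋₊ * (2 * Real.pi), ⟨by linarith, by linarith⟩, _, by ring⟩

theorem exists_eq_nat_mul_two_pi_of_coe_eq_zero {s x : ℝ} (hs : s = 1 ∨ s = -1) (hx : 0 ≤ x)
    (h : ((s * x : ℝ) : Real.Angle) = 0) : ∃ k : ℕ, x = k * (2 * Real.pi) := by
  have hcoe : (x : Real.Angle) = 0 := by
    rcases hs with rfl | rfl <;> simpa using h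
  obtain ⟨n, hn⟩ := Real.Angle.coe_eq_zero_iff.1 hcoe
  rw [zsmul_eq_mul] at hn
  have hn0 : 0 ≤ n := by
    have : 0 ≤ (n : ℝ) := nonneg_of_mul_nonneg_left (hn ▸ hx) Real.two_pi_pos
    exact_mod_cast this
  lift n to ℕ using hn0
  exact ⟨n, by exact_mod_cast hn.symm⟩

theorem coe_mul_ne_zero_of_mem_Ioo {s x : ℝ} (hs : s = 1 ∨ s = -1) (hx : x ∈ Ioo 0 (2 * Real.pi)) :
    ((s * x : ℝ) : Real.Angle) ≠ 0 := fun h ↦ by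
  obtain ⟨k, rfl⟩ := exists_eq_nat_mul_two_pi_of_coe_eq_zero hs hx.1.le h
  have hpos : (0 : ℝ) < k := pos_of_mul_pos_left hx.1 Real.two_pi_pos.le
  have hlt : (k : ℝ) < 1 := by
    by_contra! h1
    linarith [hx.2, mul_le_mul_of_nonneg_right h1 Real.two_pi_pos.le]
  norm_cast at hpos hlt
  omega

theorem toConfig_eq_of_coe_eq (p : ℂ) {x y : ℝ} (h : (x : Real.Angle) = y) :
    toConfig (p, x) = toConfig (p, y) := by
  simp only [toConfig, Real.Angle.coe_add, h]

theorem PCSC_eq_toConfig {s σ : ℝ} (hs : s = 1 ∨ s = -1) (hσ : σ = 1 ∨ σ = -1) (t τ₁ τ₂ : ℝ) :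
    PCSC s σ t τ₁ τ₂ = toConfig (s * (cis (s * τ₁) - 1) + (τ₂ - τ₁ : ℝ) * (I * cis (s * τ₁)) +
      σ * (cis (s * τ₁ + σ * (t - τ₂)) - cis (s * τ₁)), s * τ₁ + σ * (t - τ₂)) := by
  simp only [PCSC, toConfig, Prod.mk.injEq, ← add_assoc, and_true]
  rcases hs with rfl | rfl <;> rcases hσ with rfl | rfl <;>
    constructor <;> simp <;> ring

theorem PCCC_eq_toConfig {s : ℝ} (hs : s = 1 ∨ s = -1) (t τ₁ τ₂ : ℝ) :
    PCCC s t τ₁ τ₂ = toConfig (s * (cis (s * τ₁) - 1) +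
      (-s : ℝ) * (cis (s * (2 * τ₁ - τ₂)) - cis (s * τ₁)) +
      s * (cis (s * (2 * τ₁ - 2 * τ₂ + t)) - cis (s * (2 * τ₁ - τ₂))),
      s * (2 * τ₁ - 2 * τ₂ + t)) := by
  simp only [PCCC, toConfig, Prod.mk.injEq, and_true]
  rcases hs with rfl | rfl <;> constructor <;>
    simp only [one_mul, neg_mul, Complex.add_re, Complex.add_im, Complex.mul_re, Complex.mul_im,
      Complex.sub_re, Complex.sub_im, Complex.one_re, Complex.one_im, Complex.ofReal_re,
      Complex.ofReal_im, cis_re, cis_im, Real.cos_neg, Real.sin_neg] <;>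
    ring

theorem displacement_add {θ : ℝ → ℝ} (hθ : Continuous θ) (x y z : ℝ) :
    displacement θ x y + displacement θ y z = displacement θ x z :=
  integral_add_adjacent_intervals (Continuous.intervalIntegrable (by fun_prop) _ _)
    (Continuous.intervalIntegrable (by fun_prop) _ _)

theorem HasSlopeOn.displacement_eq {θ : ℝ → ℝ} {s x y : ℝ} (hslope : HasSlopeOn θ s (Icc x y))
    (hs : s = 1 ∨ s = -1) (hxy : x ≤ y) :
    displacement θ x y = s * (cis (θ y) - cis (θ x)) := by
  have hderiv : ∀ r ∈ uIcc x y,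
      HasDerivAt (fun q ↦ s * cis (θ x + s * (q - x))) (I * cis (θ x + s * (r - x))) r := by
    intro r _
    have hline : HasDerivAt (fun q ↦ θ x + s * (q - x)) s r := by
      simpa using (((hasDerivAt_id r).sub_const x).const_mul s).const_add (θ x)
    refine (((hasDerivAt_cis _).scomp r hline).const_mul (s : ℂ)).congr_deriv ?_
    rcases hs with rfl | rfl <;> simp
  have hcongr : displacement θ x y = ∫ r in x..y, I * cis (θ x + s * (r - x)) := by
    refine integral_congr fun r hr ↦ ?_
    rw [uIcc_of_le hxy] at hr
    simp only [hslope x (left_mem_Icc.2 hxy) r hr]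
  rw [hcongr,
    integral_eq_sub_of_hasDerivAt hderiv (Continuous.intervalIntegrable (by fun_prop) _ _),
    hslope x (left_mem_Icc.2 hxy) y (right_mem_Icc.2 hxy)]
  simp [mul_sub]

/-- On `[x, y]` the heading `θ` brings the car to the same configuration as a straight segment, the
time lost against the straight segment being that of an integral number of full turns. -/
def IsStraightUpToTurns (θ : ℝ → ℝ) (x y : ℝ) : Prop :=
  (θ y : Real.Angle) = θ x ∧ ∃ k : ℕ, k * (2 * Real.pi) ≤ y - x ∧
    displacement θ x y = (y - x - k * (2 * Real.pi) : ℝ) * (I * cis (θ x))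

namespace IsStraightUpToTurns

variable {θ : ℝ → ℝ} {x y z : ℝ}

theorem refl (θ : ℝ → ℝ) (x : ℝ) : IsStraightUpToTurns θ x x :=
  ⟨rfl, 0, by simp, by simp [displacement]⟩

theorem trans (hxy : IsStraightUpToTurns θ x y) (hyz : IsStraightUpToTurns θ y z)
    (hθ : Continuous θ) : IsStraightUpToTurns θ x z := by
  obtain ⟨hθy, k, hk, hdisp⟩ := hxy
  obtain ⟨hθz, m, hm, hdisp'⟩ := hyz
  refine ⟨hθz.trans hθy, k + m, by push_cast; linarith, ?_⟩
  rw [← displacement_add hθ x y z, hdisp, hdisp', cis_eq_of_coe_eq hθy]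
  push_cast
  ring

end IsStraightUpToTurns

section Arcs

variable {θ : ℝ → ℝ} {a b T : ℝ}

theorem endConfig_mem_ECSC (hθ : IsHeading θ) (ha : 0 ≤ a) (hbT : b ≤ T) {s σ : ℝ}
    (hs : s = 1 ∨ s = -1) (hσ : σ = 1 ∨ σ = -1) (hfirst : HasSlopeOn θ s (Icc 0 a))
    (hmid : IsStraightUpToTurns θ a b) (hlast : HasSlopeOn θ σ (Icc b T)) :
    endConfig θ T ∈ ECSC T := by
  obtain ⟨hθb, k, hk, hdisp⟩ := hmid
  obtain ⟨τ, hτ, j, rfl⟩ := exists_eq_add_nat_mul_two_pi ha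
  set a := τ + j * (2 * Real.pi)
  have hθa : (θ a : Real.Angle) = (s * τ : ℝ) := by
    rw [hfirst 0 ⟨le_rfl, ha⟩ a ⟨ha, le_rfl⟩, hθ.2, zero_add, sub_zero,
      coe_mul_add_nat_mul_two_pi hs]
  have hθT : (θ T : Real.Angle) =
      (s * τ + σ * (T - (τ + (b - a - k * (2 * Real.pi)))) : ℝ) := by
    rw [show T - (τ + (b - a - k * (2 * Real.pi))) = T - b + (j + k : ℕ) * (2 * Real.pi) by
      simp only [a]; push_cast; ring, hlast b ⟨le_rfl, hbT⟩ T ⟨hbT, le_rfl⟩, Real.Angle.coe_add,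
      Real.Angle.coe_add, coe_mul_add_nat_mul_two_pi hσ, hθb, hθa]
  have hj : 0 ≤ j * (2 * Real.pi) := by positivity
  have hk' : 0 ≤ k * (2 * Real.pi) := by positivity
  refine ⟨s, σ, τ, τ + (b - a - k * (2 * Real.pi)), hs, hσ, hτ,
    ⟨by linarith, by simp only [a]; linarith⟩, ?_⟩
  rw [PCSC_eq_toConfig hs hσ, ← toConfig_eq_of_coe_eq _ hθT, ← cis_eq_of_coe_eq hθT,
    ← cis_eq_of_coe_eq hθa, endConfig, ← displacement_add hθ.1.continuous 0 a T,
    ← displacement_add hθ.1.continuous a b T, hfirst.displacement_eq hs ha, hdisp,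
    hlast.displacement_eq hσ hbT, cis_eq_of_coe_eq hθb, hθ.2, cis_zero, add_sub_cancel_left,
    ← add_assoc]

theorem endConfig_mem_ECCC (hθ : IsHeading θ) (ha : 0 ≤ a) (hab : a ≤ b) (hbT : b ≤ T) {s : ℝ}
    (hs : s = 1 ∨ s = -1) (hfirst : HasSlopeOn θ s (Icc 0 a))
    (hmid : HasSlopeOn θ (-s) (Icc a b)) (hlast : HasSlopeOn θ s (Icc b T)) :
    endConfig θ T ∈ ECCC T := by
  have hs' : -s = 1 ∨ -s = -1 := by rcases hs with rfl | rfl <;> simp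
  obtain ⟨τ, hτ, j, rfl⟩ := exists_eq_add_nat_mul_two_pi ha
  obtain ⟨δ, hδ, k, hb⟩ := exists_eq_add_nat_mul_two_pi (sub_nonneg.2 hab)
  set a := τ + j * (2 * Real.pi)
  have hθa : (θ a : Real.Angle) = (s * τ : ℝ) := by
    rw [hfirst 0 ⟨le_rfl, ha⟩ a ⟨ha, le_rfl⟩, hθ.2, zero_add, sub_zero,
      coe_mul_add_nat_mul_two_pi hs]
  have hθb : (θ b : Real.Angle) = (s * (2 * τ - (τ + δ)) : ℝ) := by
    rw [hmid a ⟨le_rfl, hab⟩ b ⟨hab, le_rfl⟩, hb, Real.Angle.coe_add,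
      coe_mul_add_nat_mul_two_pi hs', hθa, ← Real.Angle.coe_add]
    ring_nf
  have hθT : (θ T : Real.Angle) = (s * (2 * τ - 2 * (τ + δ) + T) : ℝ) := by
    rw [show s * (2 * τ - 2 * (τ + δ) + T) =
        s * (2 * τ - (τ + δ)) + s * (T - b + (j + k : ℕ) * (2 * Real.pi)) by
      simp only [sub_eq_iff_eq_add.1 hb, a]; push_cast; ring,
      hlast b ⟨le_rfl, hbT⟩ T ⟨hbT, le_rfl⟩, Real.Angle.coe_add, Real.Angle.coe_add,
      coe_mul_add_nat_mul_two_pi hs, hθb]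
  have hj : 0 ≤ j * (2 * Real.pi) := by positivity
  have hk : 0 ≤ k * (2 * Real.pi) := by positivity
  refine ⟨s, τ, τ + δ, hs, hτ, ⟨by linarith [hδ.1], by simp only [a] at hb; linarith⟩,
    by simpa using hδ, ?_⟩
  rw [PCCC_eq_toConfig hs, ← toConfig_eq_of_coe_eq _ hθT, ← cis_eq_of_coe_eq hθT,
    ← cis_eq_of_coe_eq hθb, ← cis_eq_of_coe_eq hθa, endConfig,
    ← displacement_add hθ.1.continuous 0 a T, ← displacement_add hθ.1.continuous a b T,
    hfirst.displacement_eq hs ha, hmid.displacement_eq hs' hab, hlast.displacement_eq hs hbT,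
    hθ.2, cis_zero, ← add_assoc]

theorem endConfig_mem_of_three_arcs (hθ : IsHeading θ) (ha : 0 ≤ a) (hab : a ≤ b) (hbT : b ≤ T)
    {s₁ s₂ s₃ : ℝ} (hs₁ : s₁ = 1 ∨ s₁ = -1) (hs₂ : s₂ = 1 ∨ s₂ = -1) (hs₃ : s₃ = 1 ∨ s₃ = -1)
    (h₁ : HasSlopeOn θ s₁ (Icc 0 a)) (h₂ : HasSlopeOn θ s₂ (Icc a b))
    (h₃ : HasSlopeOn θ s₃ (Icc b T)) : endConfig θ T ∈ ECSC T ∪ ECCC T := by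
  by_cases h₁₂ : s₂ = s₁
  · subst h₁₂
    exact .inl (endConfig_mem_ECSC hθ (ha.trans hab) hbT hs₂ hs₃ (h₁.trans h₂ ha hab)
      (.refl θ b) h₃)
  by_cases h₂₃ : s₃ = s₂
  · subst h₂₃
    exact .inl (endConfig_mem_ECSC hθ ha (hab.trans hbT) hs₁ hs₃ h₁ (.refl θ a)
      (h₂.trans h₃ hab hbT))
  obtain ⟨rfl, rfl⟩ : s₂ = -s₁ ∧ s₃ = s₁ := by
    rcases hs₁ with rfl | rfl <;> rcases hs₂ with rfl | rfl <;> rcases hs₃ with rfl | rfl <;>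
      simp_all
  exact .inr (endConfig_mem_ECCC hθ ha hab hbT hs₁ h₁ h₂ h₃)

end Arcs

/-! ### Singular zeros of the switching function -/

theorem exists_first_zero {G : ℝ → ℝ} (hG : Continuous G) {x y : ℝ} (hxy : x ≤ y) (hy : G y = 0) :
    ∃ d ∈ Icc x y, G d = 0 ∧ ∀ q ∈ Ico x d, G q ≠ 0 := by
  obtain ⟨d, ⟨hd, hGd⟩, hmin⟩ :=
    (isCompact_Icc.inter_right (isClosed_singleton.preimage hG)).exists_isLeast
      ⟨y, right_mem_Icc.2 hxy, hy⟩
  exact ⟨d, hd, hGd, fun q hq hGq ↦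
    hq.2.not_ge (hmin ⟨⟨hq.1, hq.2.le.trans hd.2⟩, hGq⟩)⟩

theorem exists_last_zero {G : ℝ → ℝ} (hG : Continuous G) {x y : ℝ} (hxy : x ≤ y) (hx : G x = 0) :
    ∃ c ∈ Icc x y, G c = 0 ∧ ∀ q ∈ Ioc c y, G q ≠ 0 := by
  obtain ⟨c, ⟨hc, hGc⟩, hmax⟩ :=
    (isCompact_Icc.inter_right (isClosed_singleton.preimage hG)).exists_isGreatest
      ⟨x, left_mem_Icc.2 hxy, hx⟩
  exact ⟨c, hc, hGc, fun q hq hGq ↦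
    hq.1.not_ge (hmax ⟨⟨hc.1.trans hq.1.le, hq.2⟩, hGq⟩)⟩

theorem eq_of_forall_coe_eq {θ : ℝ → ℝ} (hθ : Continuous θ) {x y : ℝ} (hxy : x ≤ y)
    (h : ∀ r ∈ Icc x y, (θ r : Real.Angle) = θ x) {r : ℝ} (hr : r ∈ Icc x y) : θ r = θ x := by
  have hdiscrete : IsDiscrete (AddSubgroup.zmultiples (2 * Real.pi) : Set ℝ) :=
    ⟨inferInstanceAs (DiscreteTopology (AddSubgroup.zmultiples (2 * Real.pi)))⟩
  have hmaps : MapsTo (fun q ↦ θ q - θ x) (Icc x y) (AddSubgroup.zmultiples (2 * Real.pi)) :=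
    fun q hq ↦ by
      obtain ⟨n, hn⟩ := Real.Angle.angle_eq_iff_two_pi_dvd_sub.1 (h q hq)
      exact ⟨n, by simp [hn, mul_comm]⟩
  have := isPreconnected_Icc.constant_of_mapsTo hdiscrete (by fun_prop) hmaps hr
    (left_mem_Icc.2 hxy)
  simpa [sub_eq_zero] using this

theorem coe_eq_of_cos_sub_eq {x y α : ℝ} (hsin : Real.sin (x - α) = 0)
    (hcos : Real.cos (y - α) = Real.cos (x - α)) : (y : Real.Angle) = x := by
  have hneg : -((x - α : ℝ) : Real.Angle) = (x - α : ℝ) := by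
    rw [Real.Angle.neg_eq_self_iff, ← Real.Angle.sin_eq_zero_iff, Real.Angle.sin_coe, hsin]
  have hcoe := Real.Angle.cos_eq_iff_coe_eq_or_eq_neg.1 hcos
  rw [hneg, or_self] at hcoe
  simpa using hcoe

namespace IsStraightUpToTurns

variable {θ : ℝ → ℝ} {x y s : ℝ}

theorem of_hasSlopeOn (hslope : HasSlopeOn θ s (Icc x y)) (hs : s = 1 ∨ s = -1) (hxy : x ≤ y)
    (hcoe : (θ y : Real.Angle) = θ x) : IsStraightUpToTurns θ x y := by
  obtain ⟨k, hk⟩ := exists_eq_nat_mul_two_pi_of_coe_eq_zero hs (sub_nonneg.2 hxy) <| by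
    simpa [hslope x (left_mem_Icc.2 hxy) y (right_mem_Icc.2 hxy)] using hcoe
  refine ⟨hcoe, k, hk.ge, ?_⟩
  rw [hslope.displacement_eq hs hxy, cis_eq_of_coe_eq hcoe, ← hk]
  simp

theorem of_forall_coe_eq (hθ : Continuous θ) (hxy : x ≤ y)
    (h : ∀ r ∈ Icc x y, (θ r : Real.Angle) = θ x) : IsStraightUpToTurns θ x y := by
  refine ⟨h y (right_mem_Icc.2 hxy), 0, by simpa using hxy, ?_⟩
  have hcongr : displacement θ x y = ∫ _ in x..y, I * cis (θ x) := by
    refine integral_congr fun r hr ↦ ?_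
    rw [uIcc_of_le hxy] at hr
    simp only [eq_of_forall_coe_eq hθ hxy h hr]
  rw [hcongr, intervalIntegral.integral_const, Complex.real_smul]
  simp

end IsStraightUpToTurns

namespace IsSwitchingFunction

variable {θ G : ℝ → ℝ} {T ρ α : ℝ}

/-- A gap between consecutive zeros is a positive number of full turns, so that there are only
finitely many gaps. -/
theorem isStraightUpToTurns (h : IsSwitchingFunction θ T ρ α G) (hθ : Continuous θ) {a : Real.Angle}
    (hzero : ∀ r ∈ Icc 0 T, G r = 0 ↔ (θ r : Real.Angle) = a) {x y : ℝ} (hx : 0 ≤ x)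
    (hxy : x ≤ y) (hy : y ≤ T) (hGx : G x = 0) (hGy : G y = 0) : IsStraightUpToTurns θ x y := by
  have hcoe : ∀ {r q}, r ∈ Icc 0 T → q ∈ Icc 0 T → G r = 0 → G q = 0 →
      (θ q : Real.Angle) = θ r := fun hr hq hGr hGq ↦
    ((hzero _ hq).1 hGq).trans ((hzero _ hr).1 hGr).symm
  obtain ⟨n, hn⟩ := exists_nat_gt ((y - x) / (2 * Real.pi))
  rw [div_lt_iff₀ Real.two_pi_pos] at hn
  induction n generalizing x y with
  | zero => simp only [Nat.cast_zero, zero_mul] at hn; linarith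
  | succ n ih =>
    by_cases hflat : ∀ r ∈ Icc x y, G r = 0
    · exact .of_forall_coe_eq hθ hxy fun r hr ↦
        hcoe ⟨hx, hxy.trans hy⟩ ⟨hx.trans hr.1, hr.2.trans hy⟩ hGx (hflat r hr)
    push Not at hflat
    obtain ⟨r, hr, hGr⟩ := hflat
    obtain ⟨c, hc, hGc, hcr⟩ := exists_last_zero h.continuous hr.1 hGx
    obtain ⟨d, hd, hGd, hrd⟩ := exists_first_zero h.continuous hr.2 hGy
    have hcd : c < d := (hc.2.trans hd.1).lt_of_ne fun hcd ↦
      hGr (le_antisymm hc.2 (hcd ▸ hd.1) ▸ hGc)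
    obtain ⟨s, hs, -, hslope⟩ := h.exists_hasSlopeOn (hx.trans hc.1) (hd.2.trans hy) fun q hq ↦
      (le_or_gt q r).elim (fun hqr ↦ hcr q ⟨hq.1, hqr⟩) fun hrq ↦ hrd q ⟨hrq.le, hq.2⟩
    have hcoe_cd : (θ d : Real.Angle) = θ c :=
      hcoe ⟨hx.trans hc.1, hcd.le.trans (hd.2.trans hy)⟩
        ⟨hx.trans (hc.1.trans hcd.le), hd.2.trans hy⟩ hGc hGd
    have hgap : 2 * Real.pi ≤ d - c := by
      by_contra! hlt
      refine coe_mul_ne_zero_of_mem_Ioo hs ⟨sub_pos.2 hcd, hlt⟩ ?_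
      simpa [hslope c (left_mem_Icc.2 hcd.le) d (right_mem_Icc.2 hcd.le)] using hcoe_cd
    push_cast at hn
    have hxc := ih hx hc.1 (hcd.le.trans (hd.2.trans hy)) hGx hGc (by linarith [hd.2])
    have hdy := ih (hx.trans (hc.1.trans hcd.le)) hd.2 hy hGd hGy (by linarith [hc.1])
    exact (hxc.trans (.of_hasSlopeOn hslope hs hcd.le hcoe_cd) hθ).trans hdy hθ

theorem endConfig_mem_ECSC_of_sin_eq_zero (h : IsSwitchingFunction θ T ρ α G) (hθ : IsHeading θ)
    {z : ℝ} (hz : z ∈ Icc 0 T) (hGz : G z = 0) (hsin : Real.sin (θ z - α) = 0) :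
    endConfig θ T ∈ ECSC T := by
  have hzero : ∀ r ∈ Icc 0 T, G r = 0 ↔ (θ r : Real.Angle) = θ z := fun r hr ↦ by
    rw [h.eq_zero_iff_cos_eq hθ.1 hz hr hGz]
    refine ⟨coe_eq_of_cos_sub_eq hsin, fun hcoe ↦ ?_⟩
    rw [← Real.Angle.cos_coe, Real.Angle.coe_sub, hcoe, ← Real.Angle.coe_sub, Real.Angle.cos_coe]
  obtain ⟨a, ha, hGa, hbefore⟩ := exists_first_zero h.continuous hz.1 hGz
  obtain ⟨b, hb, hGb, hafter⟩ := exists_last_zero h.continuous hz.2 hGz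
  have hab : a ≤ b := ha.2.trans hb.1
  obtain ⟨s, hs, -, hfirst⟩ := h.exists_hasSlopeOn le_rfl (hab.trans hb.2)
    fun r hr ↦ hbefore r (Ioo_subset_Ico_self hr)
  obtain ⟨σ, hσ, -, hlast⟩ := h.exists_hasSlopeOn (ha.1.trans hab) le_rfl
    fun r hr ↦ hafter r (Ioo_subset_Ioc_self hr)
  exact endConfig_mem_ECSC hθ ha.1 hb.2 hs hσ hfirst
    (h.isStraightUpToTurns hθ.1.continuous hzero ha.1 hab hb.2 hGa hGb) hlast

end IsSwitchingFunction

/-! ### Four arcs are not extremal -/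

/-- The function `θ` with its values on `[p, q]` traversed backwards. -/
noncomputable def reverseOn (θ : ℝ → ℝ) (p q r : ℝ) : ℝ :=
  open Classical in θ (if r ∈ Icc p q then p + q - r else r)

section Reversal

variable {θ : ℝ → ℝ} {p q r s x y T : ℝ}

theorem reverseOn_of_mem (hr : r ∈ Icc p q) : reverseOn θ p q r = θ (p + q - r) := by
  simp only [reverseOn, if_pos hr]

theorem reverseOn_of_notMem_Ioo (hpq : θ p = θ q) (hr : r ∉ Ioo p q) :
    reverseOn θ p q r = θ r := by
  by_cases hmem : r ∈ Icc p q
  · rw [reverseOn_of_mem hmem]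
    rcases eq_endpoints_or_mem_Ioo_of_mem_Icc hmem with rfl | rfl | hIoo
    · simp [hpq]
    · simp [hpq]
    · exact absurd hIoo hr
  · simp only [reverseOn, if_neg hmem]

theorem lipschitzWith_reverseOn (hθ : LipschitzWith 1 θ) (hpq : θ p = θ q) :
    LipschitzWith 1 (reverseOn θ p q) := by
  rw [lipschitzWith_one_iff] at hθ ⊢
  intro x y
  wlog hxy : x ≤ y generalizing x y
  · rw [abs_sub_comm, abs_sub_comm x]
    exact this y x (le_of_not_ge hxy)
  by_cases hx : x ∈ Ioo p q <;> by_cases hy : y ∈ Ioo p q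
  · rw [reverseOn_of_mem (Ioo_subset_Icc_self hx), reverseOn_of_mem (Ioo_subset_Icc_self hy)]
    refine (hθ _ _).trans_eq ?_
    rw [sub_sub_sub_cancel_left, abs_sub_comm]
  · have hqy : q ≤ y := not_lt.1 fun h ↦ hy ⟨hx.1.trans_le hxy, h⟩
    rw [reverseOn_of_mem (Ioo_subset_Icc_self hx), reverseOn_of_notMem_Ioo hpq hy]
    calc |θ (p + q - x) - θ y| ≤ |θ (p + q - x) - θ p| + |θ q - θ y| := by
          simpa only [hpq] using abs_sub_le (θ (p + q - x)) (θ q) (θ y)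
      _ ≤ |p + q - x - p| + |q - y| := add_le_add (hθ _ _) (hθ _ _)
      _ = |x - y| := by
        rw [abs_of_nonneg (by linarith [hx.2]), abs_of_nonpos (sub_nonpos.2 hqy),
          abs_of_nonpos (sub_nonpos.2 hxy)]
        ring
  · have hxp : x ≤ p := not_lt.1 fun h ↦ hx ⟨h, hxy.trans_lt hy.2⟩
    rw [reverseOn_of_mem (Ioo_subset_Icc_self hy), reverseOn_of_notMem_Ioo hpq hx]
    calc |θ x - θ (p + q - y)| ≤ |θ x - θ p| + |θ q - θ (p + q - y)| := by
          simpa only [hpq] using abs_sub_le (θ x) (θ q) (θ (p + q - y))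
      _ ≤ |x - p| + |q - (p + q - y)| := add_le_add (hθ _ _) (hθ _ _)
      _ = |x - y| := by
        rw [abs_of_nonpos (sub_nonpos.2 hxp), abs_of_nonneg (by linarith [hy.1]),
          abs_of_nonpos (sub_nonpos.2 hxy)]
        ring
  · rw [reverseOn_of_notMem_Ioo hpq hx, reverseOn_of_notMem_Ioo hpq hy]
    exact hθ x y

theorem displacement_reverseOn (hpq : p ≤ q) :
    displacement (reverseOn θ p q) p q = displacement θ p q := by
  have hcongr : displacement (reverseOn θ p q) p q = ∫ r in p..q, I * cis (θ (p + q - r)) :=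
    integral_congr fun r hr ↦ by
      rw [uIcc_of_le hpq] at hr
      simp only [reverseOn_of_mem hr]
  rw [hcongr, integral_comp_sub_left (fun r ↦ I * cis (θ r)), add_sub_cancel_right,
    add_sub_cancel_left, displacement]

theorem displacement_reverseOn_of_disjoint (hpq : θ p = θ q) (hxy : x ≤ y)
    (h : Disjoint (Icc x y) (Ioo p q)) :
    displacement (reverseOn θ p q) x y = displacement θ x y :=
  integral_congr fun r hr ↦ by
    rw [uIcc_of_le hxy] at hr
    simp only [reverseOn_of_notMem_Ioo hpq (disjoint_left.1 h hr)]

theorem endConfig_reverseOn (hθ : LipschitzWith 1 θ) (hpq : θ p = θ q) (hp : 0 ≤ p) (hle : p ≤ q)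
    (hq : q ≤ T) : endConfig (reverseOn θ p q) T = endConfig θ T := by
  have hcont := (lipschitzWith_reverseOn hθ hpq).continuous
  rw [endConfig, endConfig, reverseOn_of_notMem_Ioo hpq fun hT ↦ hT.2.not_ge hq,
    ← displacement_add hcont 0 p T, ← displacement_add hcont p q T, displacement_reverseOn hle,
    displacement_reverseOn_of_disjoint hpq hp
      (disjoint_left.2 fun r hr hr' ↦ hr'.1.not_ge hr.2),
    displacement_reverseOn_of_disjoint hpq hq
      (disjoint_left.2 fun r hr hr' ↦ hr'.2.not_ge hr.1),
    displacement_add hθ.continuous, displacement_add hθ.continuous]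

theorem HasSlopeOn.reverseOn_of_disjoint (h : HasSlopeOn θ s (Icc x y)) (hpq : θ p = θ q)
    (hdisj : Disjoint (Icc x y) (Ioo p q)) : HasSlopeOn (reverseOn θ p q) s (Icc x y) :=
  fun u hu v hv ↦ by
    rw [reverseOn_of_notMem_Ioo hpq (disjoint_left.1 hdisj hu),
      reverseOn_of_notMem_Ioo hpq (disjoint_left.1 hdisj hv), h u hu v hv]

theorem HasSlopeOn.reverseOn (h : HasSlopeOn θ s (Icc (p + q - y) (p + q - x))) (hp : p ≤ x)
    (hq : y ≤ q) : HasSlopeOn (reverseOn θ p q) (-s) (Icc x y) := fun u hu v hv ↦ by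
  rw [reverseOn_of_mem ⟨hp.trans hu.1, hu.2.trans hq⟩,
    reverseOn_of_mem ⟨hp.trans hv.1, hv.2.trans hq⟩,
    h (p + q - u) ⟨by linarith [hu.2], by linarith [hu.1]⟩ (p + q - v)
      ⟨by linarith [hv.2], by linarith [hv.1]⟩]
  ring

end Reversal

theorem coe_eq_of_cos_eq_cos {x y z : ℝ} (hxy : Real.cos x = Real.cos y)
    (hxz : Real.cos x = Real.cos z) (hne_y : (x : Real.Angle) ≠ y) (hne_z : (x : Real.Angle) ≠ z) :
    (y : Real.Angle) = z := by
  have hy := (Real.Angle.cos_eq_iff_coe_eq_or_eq_neg.1 hxy).resolve_left hne_y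
  have hz := (Real.Angle.cos_eq_iff_coe_eq_or_eq_neg.1 hxz).resolve_left hne_z
  exact neg_injective (hy.symm.trans hz)

theorem coe_add_mul_ne {s u : ℝ} (hs : s = 1 ∨ s = -1) (hu : u ∈ Ioo 0 (2 * Real.pi)) (x : ℝ) :
    ((x + s * u : ℝ) : Real.Angle) ≠ x := by
  simpa using coe_mul_ne_zero_of_mem_Ioo hs hu

/-- Otherwise the three corners would be at pairwise different headings, whereas the headings at the
corners of an extremal have the same cosine with respect to a fixed direction. -/
theorem IsSwitchingFunction.two_pi_le_sub_of_three_corners {θ G : ℝ → ℝ} {T ρ α : ℝ}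
    (h : IsSwitchingFunction θ T ρ α G) (hθ : LipschitzWith 1 θ) {s t x y z w : ℝ}
    (hs : s = 1 ∨ s = -1) (ht : 0 ≤ t) (htx : t < x) (hxy : x < y) (hlt : y - x < z - y)
    (hzw : z < w) (hw : w ≤ T) (h₀ : HasSlopeOn θ (-s) (Icc t x))
    (h₁ : HasSlopeOn θ s (Icc x y)) (h₂ : HasSlopeOn θ (-s) (Icc y z))
    (h₃ : HasSlopeOn θ s (Icc z w)) : 2 * Real.pi ≤ z - y := by
  by_contra! hlt'
  have hs0 : s ≠ 0 := by rintro rfl; simp at hs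
  have hyz : y < z := by linarith
  have hGx : G x = 0 := h.eq_zero_of_corner ht htx hxy (by linarith) (neg_ne_zero.2 hs0) h₀
    (by rwa [neg_neg])
  have hGy : G y = 0 := h.eq_zero_of_corner (by linarith) hxy hyz (by linarith) hs0 h₁ h₂
  have hGz : G z = 0 := h.eq_zero_of_corner (by linarith) hyz hzw hw (neg_ne_zero.2 hs0) h₂
    (by rwa [neg_neg])
  have hθy : θ y = θ x + s * (y - x) := h₁ x ⟨le_rfl, hxy.le⟩ y ⟨hxy.le, le_rfl⟩
  have hθyz : θ y = θ z + s * (z - y) := by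
    rw [h₂ z ⟨hyz.le, le_rfl⟩ y ⟨le_rfl, hyz.le⟩]
    ring
  have hθx : θ x = θ z + s * (z - y - (y - x)) := by linarith
  have hyI : y ∈ Icc 0 T := ⟨by linarith, by linarith⟩
  have hcos_x := ((h.eq_zero_iff_cos_eq hθ ⟨by linarith, by linarith⟩ hyI hGx).1 hGy)
  have hcos_z := ((h.eq_zero_iff_cos_eq hθ ⟨by linarith, by linarith⟩ hyI hGz).1 hGy)
  have hcoe := coe_eq_of_cos_eq_cos hcos_x hcos_z
    (by simpa [hθy] using coe_add_mul_ne hs ⟨sub_pos.2 hxy, hlt.trans hlt'⟩ (θ x))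
    (by simpa [hθyz] using coe_add_mul_ne hs ⟨sub_pos.2 hyz, hlt'⟩ (θ z))
  refine coe_add_mul_ne hs ⟨sub_pos.2 hlt, by linarith⟩ (θ z) ?_
  rw [← hθx]
  simpa using hcoe

/-- Reversing the arcs between two instants of equal heading gives a trajectory to the same
configuration with three corners. -/
theorem mem_interior_reachTube_of_four_arcs {θ : ℝ → ℝ} (hθ : IsHeading θ) {s t z l T : ℝ}
    (hs : s = 1 ∨ s = -1) (ht : 0 ≤ t) (htz : t < z) (hl : l ∈ Ioo 0 (2 * Real.pi))
    (hT : z + 2 * l ≤ T) (h₀ : HasSlopeOn θ (-s) (Icc t z)) (h₁ : HasSlopeOn θ s (Icc z (z + l)))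
    (h₂ : HasSlopeOn θ (-s) (Icc (z + l) (z + 2 * l))) :
    (T, endConfig θ T) ∈ interior reachTube := by
  obtain ⟨hl0, hl2⟩ := hl
  obtain ⟨δ, hδ0, hδ⟩ := exists_between (lt_min (sub_pos.2 htz) hl0)
  rw [lt_min_iff] at hδ
  obtain ⟨p, hp⟩ : ∃ p, p = z - δ := ⟨_, rfl⟩
  obtain ⟨q, hq⟩ : ∃ q, q = z + 2 * l - δ := ⟨_, rfl⟩
  have hpq : θ p = θ q := by
    rw [h₂ (z + l) ⟨le_rfl, by linarith⟩ q ⟨by linarith, by linarith⟩,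
      h₁ z ⟨le_rfl, by linarith⟩ (z + l) ⟨by linarith, le_rfl⟩,
      h₀ z ⟨htz.le, le_rfl⟩ p ⟨by linarith, by linarith⟩, hp, hq]
    ring
  by_contra hmem
  rw [← endConfig_reverseOn hθ.1 hpq (by linarith) (by linarith) (by linarith)] at hmem
  have hlip := lipschitzWith_reverseOn hθ.1 hpq
  obtain ⟨ρ, α, G, hG⟩ := exists_isSwitchingFunction
    ⟨hlip, by rw [reverseOn_of_notMem_Ioo hpq fun h ↦ h.1.not_ge (by linarith), hθ.2]⟩
    (by linarith) hmem
  have hshort : ¬2 * Real.pi ≤ z + 2 * l - 2 * δ - (z + l - 2 * δ) := by linarith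
  refine hshort (hG.two_pi_le_sub_of_three_corners hlip (x := p) (w := q) hs ht (by linarith)
    (by linarith) (by linarith) (by linarith) (by linarith) ?_ ?_ ?_ ?_)
  · exact (h₀.mono (Icc_subset_Icc_right (by linarith))).reverseOn_of_disjoint hpq
      (disjoint_left.2 fun r hr hr' ↦ hr'.1.not_ge hr.2)
  · simpa using
      (h₂.mono (Icc_subset_Icc (by linarith) (by linarith))).reverseOn le_rfl (by linarith)
  · exact (h₁.mono (Icc_subset_Icc (by linarith) (by linarith))).reverseOn (by linarith)
      (by linarith)
  · simpa using
      (h₀.mono (Icc_subset_Icc (by linarith) (by linarith))).reverseOn (by linarith) le_rfl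

/-! ### Transversal zeros of the switching function -/

theorem exists_next_zero {G : ℝ → ℝ} (hG : Continuous G) {z w : ℝ} (hzw : z < w)
    (hz : ∀ᶠ r in 𝓝[>] z, G r ≠ 0) (hw : G w = 0) :
    ∃ d ∈ Ioc z w, G d = 0 ∧ ∀ q ∈ Ioo z d, G q ≠ 0 := by
  obtain ⟨y, hy, hne⟩ := (mem_nhdsGT_iff_exists_Ioo_subset' hzw).1 hz
  obtain ⟨m, hzm, hm⟩ := exists_between (lt_min hy hzw)
  rw [lt_min_iff] at hm
  obtain ⟨d, hd, hGd, hmd⟩ := exists_first_zero hG hm.2.le hw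
  refine ⟨d, ⟨hzm.trans_le hd.1, hd.2⟩, hGd, fun q hq ↦ ?_⟩
  rcases lt_or_ge q m with hqm | hmq
  · exact hne ⟨hq.1, hqm.trans hm.1⟩
  · exact hmd q ⟨hmq, hq.2⟩

theorem exists_mem_Ico_coe_mul_eq {s : ℝ} (hs : s = 1 ∨ s = -1) (x : ℝ) :
    ∃ u ∈ Ico 0 (2 * Real.pi), ((s * u : ℝ) : Real.Angle) = x := by
  refine ⟨toIcoMod Real.two_pi_pos 0 (s * x), ?_, ?_⟩
  · simpa using toIcoMod_mem_Ico Real.two_pi_pos 0 (s * x)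
  · rcases hs with rfl | rfl <;> simp [Real.Angle.coe_toIcoMod]

namespace IsSwitchingFunction

variable {θ G : ℝ → ℝ} {T ρ α x y z s σ : ℝ}

theorem slope_eq_neg_of_transversal (h : IsSwitchingFunction θ T ρ α G) (hGz : G z = 0)
    (hsin : Real.sin (θ z - α) ≠ 0) (hxz : x < z) (hzy : z < y) (hs : s = 1 ∨ s = -1)
    (hσ : σ = 1 ∨ σ = -1) (hleft : ∀ r ∈ Ioo x z, 0 < s * G r)
    (hright : ∀ r ∈ Ioo z y, 0 < σ * G r) : σ = -s := by
  by_contra hne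
  obtain rfl : σ = s := by rcases hs with rfl | rfl <;> rcases hσ with rfl | rfl <;> simp_all
  have hmin : IsLocalMin (fun r ↦ σ * G r) z := by
    filter_upwards [Ioo_mem_nhds hxz hzy] with r hr
    rw [hGz, mul_zero]
    rcases lt_trichotomy r z with hrz | rfl | hzr
    · exact (hleft r ⟨hr.1, hrz⟩).le
    · simp [hGz]
    · exact (hright r ⟨hzr, hr.2⟩).le
  have hρ : ρ ≠ 0 := fun hρ ↦ h.ne_zero hρ z hGz
  have hσ0 : σ ≠ 0 := by rintro rfl; simp at hσ
  exact mul_ne_zero hσ0 (mul_ne_zero hρ hsin)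
    (hmin.hasDerivAt_eq_zero ((h.hasDerivAt z).const_mul σ))

theorem sub_lt_two_pi (h : IsSwitchingFunction θ T ρ α G) (hθ : LipschitzWith 1 θ) (hx : 0 ≤ x)
    (hxy : x ≤ y) (hy : y ≤ T) (hGx : G x = 0) (hsin : Real.sin (θ x - α) ≠ 0)
    (hs : s = 1 ∨ s = -1) (hslope : HasSlopeOn θ s (Icc x y)) (hne : ∀ r ∈ Ioo x y, G r ≠ 0) :
    y - x < 2 * Real.pi := by
  by_contra! hle
  obtain ⟨u, hu, hcoe⟩ := exists_mem_Ico_coe_mul_eq hs (-(2 * (θ x - α)))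
  have hu0 : 0 < u := hu.1.lt_of_ne <| by
    rintro rfl
    refine hsin (Real.Angle.sin_coe _ ▸ Real.Angle.sin_eq_zero_iff.2 ?_)
    rw [← Real.Angle.two_nsmul_eq_zero_iff, ← Real.Angle.coe_nsmul, nsmul_eq_mul, Nat.cast_two,
      ← neg_eq_zero, ← Real.Angle.coe_neg, ← hcoe]
    simp
  have hmem : x + u ∈ Icc x y := ⟨by linarith, by linarith [hu.2]⟩
  refine hne (x + u) ⟨by linarith, by linarith [hu.2]⟩ ?_
  rw [h.eq_zero_iff_cos_eq hθ ⟨hx, hxy.trans hy⟩ ⟨hx.trans hmem.1, hmem.2.trans hy⟩ hGx,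
    hslope x (left_mem_Icc.2 hxy) _ hmem, Real.Angle.cos_eq_iff_coe_eq_or_eq_neg]
  refine .inr ?_
  rw [add_sub_cancel_left, add_sub_right_comm, Real.Angle.coe_add, hcoe, ← Real.Angle.coe_add,
    ← Real.Angle.coe_neg]
  ring_nf

/-- The car traces the headings of the first arc backwards on the second one, and the heading
determines whether `G` vanishes. -/
theorem sub_eq_sub_of_consecutive (h : IsSwitchingFunction θ T ρ α G) (hθ : LipschitzWith 1 θ)
    (hx : 0 ≤ x) (hxy : x < y) (hyz : y < z) (hz : z ≤ T) (hGx : G x = 0) (hGz : G z = 0)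
    (h₁ : HasSlopeOn θ s (Icc x y)) (h₂ : HasSlopeOn θ (-s) (Icc y z))
    (hne₁ : ∀ r ∈ Ioo x y, G r ≠ 0) (hne₂ : ∀ r ∈ Ioo y z, G r ≠ 0) : z - y = y - x := by
  have hretrace : ∀ u, 0 ≤ u → u ≤ y - x → u ≤ z - y → (G (y - u) = 0 ↔ G (y + u) = 0) := by
    intro u hu hux huz
    have hθu : θ (y - u) = θ (y + u) := by
      rw [h₁ y ⟨hxy.le, le_rfl⟩ (y - u) ⟨by linarith, by linarith⟩,
        h₂ y ⟨le_rfl, hyz.le⟩ (y + u) ⟨by linarith, by linarith⟩]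
      ring
    have hl : y - u ∈ Icc 0 T := ⟨by linarith, by linarith⟩
    have hr : y + u ∈ Icc 0 T := ⟨by linarith, by linarith⟩
    exact ⟨fun hG ↦ (h.eq_zero_iff_cos_eq hθ hl hr hG).2 (by rw [hθu]),
      fun hG ↦ (h.eq_zero_iff_cos_eq hθ hr hl hG).2 (by rw [hθu])⟩
  rcases lt_trichotomy (z - y) (y - x) with hlt | heq | hgt
  · exact absurd ((hretrace (z - y) (by linarith) hlt.le le_rfl).2 (by simpa using hGz))
      (hne₁ _ ⟨by linarith, by linarith⟩)
  · exact heq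
  · exact absurd ((hretrace (y - x) (by linarith) le_rfl hgt.le).1 (by simpa using hGx))
      (hne₂ _ ⟨by linarith, by linarith⟩)

theorem mem_interior_reachTube_of_three_zeros (h : IsSwitchingFunction θ T ρ α G)
    (hθ : IsHeading θ) (hsin : ∀ r ∈ Ioo 0 T, G r = 0 → Real.sin (θ r - α) ≠ 0)
    (hx : 0 < x) (hxy : x < y) (hyz : y < z) (hz : z < T) (hGx : G x = 0) (hGy : G y = 0)
    (hGz : G z = 0) : (T, endConfig θ T) ∈ interior reachTube := by
  have hright : ∀ r ∈ Ioo 0 T, ∀ᶠ q in 𝓝[>] r, G q ≠ 0 := fun r hr ↦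
    (h.eventually_ne_zero (hsin r hr)).filter_mono (nhdsGT_le_nhdsNE r)
  have hxT : x ∈ Ioo 0 T := ⟨hx, by linarith⟩
  have hleft := (h.eventually_ne_zero (hsin x hxT)).filter_mono (nhdsLT_le_nhdsNE x)
  obtain ⟨t, ⟨ht, htx⟩, hne₀⟩ := (mem_nhdsLT_iff_exists_mem_Ico_Ioo_subset hx).1 hleft
  obtain ⟨y', ⟨hxy', hy'⟩, hGy', hne₁⟩ := exists_next_zero h.continuous hxy (hright x hxT) hGy
  have hyT : y' ∈ Ioo 0 T := ⟨hx.trans hxy', by linarith⟩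
  obtain ⟨z', ⟨hyz', hz'⟩, hGz', hne₂⟩ :=
    exists_next_zero h.continuous (hy'.trans_lt hyz) (hright y' hyT) hGz
  obtain ⟨s₀, hs₀, hpos₀, hslope₀⟩ := h.exists_hasSlopeOn ht hxT.2.le hne₀
  obtain ⟨s₁, hs₁, hpos₁, hslope₁⟩ := h.exists_hasSlopeOn hx.le hyT.2.le hne₁
  obtain ⟨s₂, hs₂, hpos₂, hslope₂⟩ := h.exists_hasSlopeOn hyT.1.le (hz'.trans hz.le) hne₂
  obtain rfl := h.slope_eq_neg_of_transversal hGy' (hsin y' hyT hGy') hxy' hyz' hs₁ hs₂ hpos₁ hpos₂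
  obtain rfl := h.slope_eq_neg_of_transversal hGx (hsin x hxT hGx) htx hxy' hs₀ hs₁ hpos₀ hpos₁
  have hlength := h.sub_eq_sub_of_consecutive hθ.1 hx.le hxy' hyz' (hz'.trans hz.le) hGx hGz'
    hslope₁ hslope₂ hne₁ hne₂
  have hturn := h.sub_lt_two_pi hθ.1 hx.le hxy'.le hyT.2.le hGx (hsin x hxT hGx) hs₁ hslope₁ hne₁
  have hyl : x + (y' - x) = y' := by ring
  have hzl : x + 2 * (y' - x) = z' := by linarith
  refine mem_interior_reachTube_of_four_arcs hθ hs₁ ht htx ⟨sub_pos.2 hxy', hturn⟩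
    (by linarith) (by rwa [neg_neg]) ?_ ?_
  · rwa [hyl]
  · rwa [hyl, hzl]

theorem endConfig_mem_of_zeros_subset_pair (h : IsSwitchingFunction θ T ρ α G) (hθ : IsHeading θ)
    {a b : ℝ} (ha : 0 ≤ a) (hab : a ≤ b) (hb : b ≤ T)
    (hzero : ∀ r ∈ Ioo 0 T, G r = 0 → r = a ∨ r = b) : endConfig θ T ∈ ECSC T ∪ ECCC T := by
  have hne : ∀ r ∈ Ioo 0 T, r ≠ a → r ≠ b → G r ≠ 0 := fun r hr hra hrb hG ↦
    (hzero r hr hG).elim hra hrb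
  obtain ⟨s₁, hs₁, -, hslope₁⟩ := h.exists_hasSlopeOn le_rfl (hab.trans hb) fun r hr ↦
    hne r ⟨hr.1, hr.2.trans_le (hab.trans hb)⟩ hr.2.ne (hr.2.trans_le hab).ne
  obtain ⟨s₂, hs₂, -, hslope₂⟩ := h.exists_hasSlopeOn ha hb fun r hr ↦
    hne r ⟨ha.trans_lt hr.1, hr.2.trans_le hb⟩ hr.1.ne' hr.2.ne
  obtain ⟨s₃, hs₃, -, hslope₃⟩ := h.exists_hasSlopeOn (ha.trans hab) le_rfl fun r hr ↦
    hne r ⟨(ha.trans hab).trans_lt hr.1, hr.2⟩ (hab.trans_lt hr.1).ne' hr.1.ne'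
  exact endConfig_mem_of_three_arcs hθ ha hab hb hs₁ hs₂ hs₃ hslope₁ hslope₂ hslope₃

end IsSwitchingFunction

theorem exists_subset_pair_of_no_chain {S : Set ℝ} {x y : ℝ} (hxy : x ≤ y) (hS : S ⊆ Icc x y)
    (hchain : ∀ u ∈ S, ∀ v ∈ S, ∀ w ∈ S, u < v → ¬v < w) :
    ∃ a b, x ≤ a ∧ a ≤ b ∧ b ≤ y ∧ S ⊆ {a, b} := by
  rcases S.eq_empty_or_nonempty with rfl | ⟨u, hu⟩
  · exact ⟨x, x, le_rfl, le_rfl, hxy, empty_subset _⟩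
  by_cases hone : ∀ v ∈ S, v = u
  · exact ⟨u, u, (hS hu).1, le_rfl, (hS hu).2, fun v hv ↦ .inl (hone v hv)⟩
  push Not at hone
  obtain ⟨v, hv, hvu⟩ := hone
  refine ⟨min u v, max u v, le_min (hS hu).1 (hS hv).1, min_le_max, max_le (hS hu).2 (hS hv).2,
    fun w hw ↦ ?_⟩
  rcases hvu.lt_or_gt with hlt | hlt <;> grind

theorem endConfig_mem_of_notMem_interior_reachTube {θ : ℝ → ℝ} (hθ : IsHeading θ) {T : ℝ}
    (hT : 0 < T) (hmem : (T, endConfig θ T) ∉ interior reachTube) :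
    endConfig θ T ∈ ECSC T ∪ ECCC T := by
  obtain ⟨ρ, α, G, hG⟩ := exists_isSwitchingFunction hθ hT hmem
  by_cases hsing : ∃ z ∈ Ioo 0 T, G z = 0 ∧ Real.sin (θ z - α) = 0
  · obtain ⟨z, hz, hGz, hsin⟩ := hsing
    exact .inl (hG.endConfig_mem_ECSC_of_sin_eq_zero hθ (Ioo_subset_Icc_self hz) hGz hsin)
  push Not at hsing
  obtain ⟨a, b, ha, hab, hb, hzero⟩ := exists_subset_pair_of_no_chain (S := {r ∈ Ioo 0 T | G r = 0})
    hT.le (fun r hr ↦ Ioo_subset_Icc_self hr.1) fun x hx y hy z hz hxy hyz ↦ hmem <|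
      hG.mem_interior_reachTube_of_three_zeros hθ hsing hx.1.1 hxy hyz hz.1.2 hx.2 hy.2 hz.2
  exact hG.endConfig_mem_of_zeros_subset_pair hθ ha hab hb fun r hr hGr ↦ hzero ⟨hr, hGr⟩

theorem mem_ECSC_of_mem_dubinsReach_zero {P : ℝ × ℝ × Real.Angle} (hP : P ∈ DubinsReach 0) :
    P ∈ ECSC 0 := by
  obtain ⟨u, -, -, rfl⟩ := hP
  exact ⟨1, 1, 0, 0, .inl rfl, .inl rfl, ⟨le_rfl, Real.two_pi_pos⟩, ⟨le_rfl, le_rfl⟩,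
    by simp [PCSC]⟩

theorem optimal_interception_point_general (E : ℝ → ℝ × ℝ × Real.Angle) (T : ℝ) (hT : 0 ≤ T)
    (hE : ContinuousWithinAt E (Ico 0 T) T)
    (hmiss : 0 < T → ∃ᶠ t in 𝓝[<] T, E t ∉ DubinsReach t) (hhit : E T ∈ DubinsReach T) :
    E T ∈ ECSC T ∪ ECCC T := by
  rcases hT.eq_or_lt with rfl | hpos
  · exact .inl (mem_ECSC_of_mem_dubinsReach_zero hhit)
  have hnotMem : (T, E T) ∉ interior reachTube := fun hint ↦ by
    rw [ContinuousWithinAt, nhdsWithin_Ico_eq_nhdsLT hpos] at hE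
    have htend : Tendsto (fun t ↦ (t, E t)) (𝓝[<] T) (𝓝 (T, E T)) :=
      (tendsto_id'.2 nhdsWithin_le_nhds).prodMk_nhds hE
    have hreach : ∀ᶠ t in 𝓝[<] T, E t ∈ DubinsReach t :=
      htend.eventually_mem (mem_interior_iff_mem_nhds.1 hint)
    exact hmiss hpos (hreach.mono fun t ht hnot ↦ hnot ht)
  obtain ⟨θ, hθ, hP⟩ := mem_dubinsReach_iff.1 hhit
  rw [← hP] at hnotMem ⊢
  exact endConfig_mem_of_notMem_interior_reachTube hθ hpos hnotMem

/-- If the minimum-time lateral interception of a continuously moving target occurs at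
the finite time `T`, then the optimal interception point is an endpoint of a CSC- or
CCC-trajectory. -/
theorem optimal_interception_point (E : ℝ → ℝ × ℝ × Real.Angle)
    (hE : ContinuousOn E (Set.Ici 0)) (T : ℝ) (hT : 0 ≤ T)
    (hmiss : ∀ t ∈ Set.Ico 0 T, E t ∉ DubinsReach t)
    (hhit : E T ∈ DubinsReach T) :
    E T ∈ ECSC T ∪ ECCC T :=
  optimal_interception_point_general E T hT ((hE T hT).mono Ico_subset_Ici_self)
    (fun hpos ↦ (eventually_of_mem (Ico_mem_nhdsLT hpos) hmiss).frequently) hhit
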